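/- Assume additionally that 1/2 < α < 1 and set H = 1/(2α). Then for every t > 0 and every ρ > 0, with T_δ⁺ := t^{1+ρ} δ^{-2H(1+ρ)}, the Cesàro limit of the mean square displacement diverges: lim_{δ→0+} Y_δ(T_δ⁺)/T_δ⁺ = +∞. -/

import Mathlib

open MeasureTheory ProbabilityTheory Filter Set
open scoped RealInnerProductSpace

/-- The covariance matrix entries `R_{ij}(x) = ∫_{ℝᵈ} cos(k·x) R̂_{ij}(k) dk`, where
`R̂_{ij}(k) = a(|k|)|k|^{-(2α+d-2)} (δ_{ij} - k_i k_j/|k|²)`. -/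
noncomputable def covEntry (d : ℕ) (α : ℝ) (a : ℝ → ℝ)
    (x : EuclideanSpace ℝ (Fin d)) (i j : Fin d) : ℝ :=
  ∫ k : EuclideanSpace ℝ (Fin d),
    Real.cos ⟪k, x⟫ *
      (a ‖k‖ * ‖k‖ ^ (-(2 * α + (d : ℝ) - 2)) *
        ((if i = j then (1:ℝ) else 0) - k i * k j / ‖k‖ ^ 2))

/-!
The displacement `y` satisfies `y' = δ F(X)`. For a second field `G`, testing `y` against `G(X)`
with the weight `T - s` and integrating by parts bounds `δ E⟪F, G⟫ T²` by the mean square of `y`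
and the second moments of `G` and of its derivative `D` along the trajectory. Expectations along
the trajectory are Eulerian ones, because the flow of the divergence-free field `v + δF` preserves
the law of the stationary environment seen from the particle; this is shown on the Euler scheme,
whose steps nearly preserve volume. For `G` take a finite average of `F` with binomial weights at
the spatial scale `T`, a Fourier multiplier with values in `[0, 1]` concentrated on `|k| ≲ 1 / T`.
With `σ = E⟪F, G⟫` one has `E|G|² ≤ σ` and `E|D|² ≤ C σ / T²`, which gives
`Y(T) / T ≥ c δ² T² σ`. The spectrum in the band `|k| ≲ 1 / T` yields `σ ≥ c T^(2α-2)`, hence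
`Y(T) / T ≥ c δ² T^(2α)`, and at `T = T_δ⁺` the right-hand side is of order `δ^(-2ρ)`.
-/

open scoped Topology NNReal ENNReal

section EulerScheme

variable {E : Type*} [NormedAddCommGroup E] [NormedSpace ℝ E] {b : E → E}

/-- One step of length `h` of the explicit Euler scheme for `x' = b x`. -/
def eulerStep (b : E → E) (h : ℝ) (x : E) : E := x + h • b x

lemma continuous_eulerStep (hb : Continuous b) (h : ℝ) : Continuous (eulerStep b h) :=
  continuous_id.add (hb.const_smul h)

variable {X : ℝ → E} {U : Set E} {L : ℝ≥0} {M S h : ℝ}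

lemma norm_sub_le_of_norm_field_le {s u : ℝ} (hX : ∀ r ∈ Icc s u, HasDerivAt X (b (X r)) r)
    (hU : ∀ r ∈ Icc s u, X r ∈ U) (hM : ∀ x ∈ U, ‖b x‖ ≤ M) {r : ℝ} (hr : r ∈ Icc s u) :
    ‖X r - X s‖ ≤ M * (r - s) :=
  norm_image_sub_le_of_norm_deriv_le_segment' (fun q hq => (hX q hq).hasDerivWithinAt)
    (fun q hq => hM _ (hU q (Ico_subset_Icc_self hq))) r hr

lemma norm_sub_eulerStep_le {s : ℝ} (hh : 0 ≤ h) (hM0 : 0 ≤ M)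
    (hX : ∀ r ∈ Icc s (s + h), HasDerivAt X (b (X r)) r) (hU : ∀ r ∈ Icc s (s + h), X r ∈ U)
    (hM : ∀ x ∈ U, ‖b x‖ ≤ M) (hL : LipschitzOnWith L b U) :
    ‖X (s + h) - eulerStep b h (X s)‖ ≤ L * M * h * h := by
  have hs : s ∈ Icc s (s + h) := left_mem_Icc.2 (by linarith)
  have hderiv : ∀ r ∈ Icc s (s + h),
      HasDerivWithinAt (fun u => X u - (u - s) • b (X s)) (b (X r) - (1 : ℝ) • b (X s))
        (Icc s (s + h)) r := fun r hr =>
    ((hX r hr).sub (((hasDerivAt_id r).sub_const s).smul_const (b (X s)))).hasDerivWithinAt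
  have hbound : ∀ r ∈ Ico s (s + h), ‖b (X r) - (1 : ℝ) • b (X s)‖ ≤ L * M * h := by
    intro r hr
    have hr' := Ico_subset_Icc_self hr
    calc ‖b (X r) - (1 : ℝ) • b (X s)‖
        ≤ L * ‖X r - X s‖ := by
          rw [one_smul]
          exact hL.norm_sub_le (hU r hr') (hU s hs)
      _ ≤ L * (M * h) := by
          gcongr
          refine (norm_sub_le_of_norm_field_le hX hU hM hr').trans ?_
          gcongr
          linarith [hr.2]
      _ = L * M * h := by ring
  have := norm_image_sub_le_of_norm_deriv_le_segment' hderiv hbound (s + h)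
    (right_mem_Icc.2 (by linarith))
  simpa [eulerStep, add_comm, sub_sub] using this

lemma norm_eulerStep_sub_le {s : ℝ} (hh : 0 ≤ h) (hM0 : 0 ≤ M)
    (hX : ∀ r ∈ Icc s (s + h), HasDerivAt X (b (X r)) r) (hU : ∀ r ∈ Icc s (s + h), X r ∈ U)
    (hM : ∀ x ∈ U, ‖b x‖ ≤ M) (hL : LipschitzOnWith L b U) {x : E} (hx : x ∈ U) :
    ‖eulerStep b h x - X (s + h)‖ ≤ (1 + L * h) * ‖x - X s‖ + L * M * h * h := by
  have hstable : ‖eulerStep b h x - eulerStep b h (X s)‖ ≤ ‖x - X s‖ + h * (L * ‖x - X s‖) := by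
    have hdiff : eulerStep b h x - eulerStep b h (X s) = (x - X s) + h • (b x - b (X s)) := by
      simp only [eulerStep, smul_sub]
      abel
    rw [hdiff]
    refine (norm_add_le _ _).trans ?_
    rw [norm_smul, Real.norm_of_nonneg hh]
    gcongr
    exact hL.norm_sub_le hx (hU s (left_mem_Icc.2 (by linarith)))
  have htrunc := norm_sub_eulerStep_le hh hM0 hX hU hM hL
  rw [norm_sub_rev] at htrunc
  linarith [norm_sub_le_norm_sub_add_norm_sub (eulerStep b h x) (eulerStep b h (X s)) (X (s + h))]

lemma norm_iterate_eulerStep_sub_le (hh : 0 ≤ h) (hM0 : 0 ≤ M)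
    (hX : ∀ s ∈ Icc 0 S, HasDerivAt X (b (X s)) s)
    (hU : ∀ s ∈ Icc 0 S, Metric.closedBall (X s) 1 ⊆ U)
    (hM : ∀ x ∈ U, ‖b x‖ ≤ M) (hL : LipschitzOnWith L b U)
    (hsmall : S * (L * M * h) * Real.exp (L * S) ≤ 1) (j : ℕ) (hj : j * h ≤ S) :
    ‖(eulerStep b h)^[j] (X 0) - X (j * h)‖ ≤ j * h * (L * M * h) * Real.exp (L * (j * h)) := by
  induction j with
  | zero => simp
  | succ j ih =>
    have hstep : ((j + 1 : ℕ) : ℝ) * h = j * h + h := by push_cast; ring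
    rw [hstep] at hj ⊢
    have hj0 : 0 ≤ j * h := by positivity
    specialize ih (by linarith)
    have hsub : Icc (j * h) (j * h + h) ⊆ Icc 0 S := Icc_subset_Icc hj0 hj
    have hclose : ‖(eulerStep b h)^[j] (X 0) - X (j * h)‖ ≤ 1 := by
      have hS : 0 ≤ S := by linarith
      refine (ih.trans ?_).trans hsmall
      gcongr <;> linarith
    have hmem : (eulerStep b h)^[j] (X 0) ∈ U :=
      hU (j * h) ⟨hj0, by linarith⟩ (mem_closedBall_iff_norm.2 hclose)
    have hexp : (1 + L * h) * Real.exp (L * (j * h)) ≤ Real.exp (L * (j * h + h)) := by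
      rw [mul_add, Real.exp_add, mul_comm]
      gcongr
      linarith [Real.add_one_le_exp (L * h)]
    have hone : 1 ≤ Real.exp (L * (j * h + h)) := Real.one_le_exp (by positivity)
    rw [Function.iterate_succ_apply']
    calc ‖eulerStep b h ((eulerStep b h)^[j] (X 0)) - X (j * h + h)‖
        ≤ (1 + L * h) * ‖(eulerStep b h)^[j] (X 0) - X (j * h)‖ + L * M * h * h :=
          norm_eulerStep_sub_le hh hM0 (fun r hr => hX r (hsub hr))
            (fun r hr => hU r (hsub hr) (Metric.mem_closedBall_self zero_le_one)) hM hL hmem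
      _ ≤ (1 + L * h) * (j * h * (L * M * h) * Real.exp (L * (j * h))) + L * M * h * h * 1 := by
          rw [mul_one]
          gcongr
      _ = j * h * (L * M * h) * ((1 + L * h) * Real.exp (L * (j * h))) + L * M * h * h * 1 := by
          ring
      _ ≤ j * h * (L * M * h) * Real.exp (L * (j * h + h))
            + L * M * h * h * Real.exp (L * (j * h + h)) := by
          gcongr
      _ = (j * h + h) * (L * M * h) * Real.exp (L * (j * h + h)) := by ring

variable [FiniteDimensional ℝ E]

lemma exists_forall_closedBall_norm_le {F : Type*} [NormedAddCommGroup F] {g : E → F}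
    (hg : Continuous g) (R : ℝ) : ∃ M : ℝ≥0, ∀ x ∈ Metric.closedBall (0 : E) R, ‖g x‖ ≤ M := by
  obtain ⟨M, hM⟩ := (isCompact_closedBall (0 : E) R).exists_bound_of_continuousOn hg.continuousOn
  exact ⟨M.toNNReal, fun x hx => (hM x hx).trans (Real.le_coe_toNNReal M)⟩

lemma exists_lipschitzOnWith_closedBall (hb : ContDiff ℝ 1 b) (R : ℝ) :
    ∃ L : ℝ≥0, LipschitzOnWith L b (Metric.closedBall 0 R) := by
  obtain ⟨L, hL⟩ := exists_forall_closedBall_norm_le (hb.continuous_fderiv one_ne_zero) R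
  exact ⟨L, (convex_closedBall 0 R).lipschitzOnWith_of_nnnorm_fderiv_le
    (fun x _ => hb.differentiable one_ne_zero x) hL⟩

lemma eventually_norm_iterate_eulerStep_sub_le (hb : ContDiff ℝ 1 b) (hS : 0 ≤ S)
    (hX : ∀ s ∈ Icc 0 S, HasDerivAt X (b (X s)) s) {ε : ℝ} (hε : 0 < ε) :
    ∀ᶠ n : ℕ in atTop, ∀ j ≤ n,
      ‖(eulerStep b (S / n))^[j] (X 0) - X (j * (S / n))‖ ≤ ε := by
  obtain ⟨R, hR⟩ := isCompact_Icc.exists_bound_of_continuousOn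
    (fun s hs => (hX s hs).continuousAt.continuousWithinAt : ContinuousOn X (Icc 0 S))
  obtain ⟨M, hM⟩ := exists_forall_closedBall_norm_le hb.continuous (R + 1)
  obtain ⟨L, hL⟩ := exists_lipschitzOnWith_closedBall hb (R + 1)
  have hU : ∀ s ∈ Icc 0 S, Metric.closedBall (X s) 1 ⊆ Metric.closedBall 0 (R + 1) :=
    fun s hs => Metric.closedBall_subset_closedBall' (by
      rw [dist_zero_right]
      linarith [hR s hs])
  have hlim : Tendsto (fun n : ℕ => S * (L * M * (S / n)) * Real.exp (L * S)) atTop (𝓝 0) := by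
    have := (tendsto_const_div_atTop_nhds_zero_nat S).const_mul (L * M : ℝ)
    simpa using (this.const_mul S).mul_const (Real.exp (L * S))
  filter_upwards [hlim.eventually_le_const (lt_min one_pos hε), eventually_gt_atTop 0]
    with n hn hn0 j hj
  have hjS : j * (S / n) ≤ S := by
    have : (j : ℝ) ≤ n := by exact_mod_cast hj
    rw [mul_div_left_comm]
    exact mul_le_of_le_one_right hS (div_le_one_of_le₀ this (by positivity))
  calc ‖(eulerStep b (S / n))^[j] (X 0) - X (j * (S / n))‖
      ≤ j * (S / n) * (L * M * (S / n)) * Real.exp (L * (j * (S / n))) :=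
        norm_iterate_eulerStep_sub_le (by positivity) M.2 hX hU hM hL
          (hn.trans (min_le_left _ _)) j hjS
    _ ≤ S * (L * M * (S / n)) * Real.exp (L * S) := by gcongr
    _ ≤ ε := hn.trans (min_le_right _ _)

end EulerScheme

section Determinant

variable {E : Type*} [NormedAddCommGroup E] [NormedSpace ℝ E] [FiniteDimensional ℝ E]

lemma differentiable_det : Differentiable ℝ (fun A : E →L[ℝ] E => A.det) := by
  let e := Module.finBasis ℝ E
  have hentry : ∀ i j, Differentiable ℝ
      (fun A : E →L[ℝ] E => LinearMap.toMatrix e e (A : E →ₗ[ℝ] E) i j) := by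
    intro i j
    simp only [LinearMap.toMatrix_apply, ContinuousLinearMap.coe_coe]
    exact ((e.coord i).toContinuousLinearMap.comp
      (ContinuousLinearMap.apply ℝ E (e j))).differentiable
  have hdet : (fun A : E →L[ℝ] E => A.det) = fun A => ∑ σ : Equiv.Perm _,
      ((Equiv.Perm.sign σ : ℤ) : ℝ) * ∏ i, LinearMap.toMatrix e e A.toLinearMap (σ i) i := by
    funext A
    rw [ContinuousLinearMap.det, ← LinearMap.det_toMatrix e, Matrix.det_apply']
  rw [hdet]
  fun_prop

lemma hasDerivAt_det_one_add_smul (A : E →L[ℝ] E) :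
    HasDerivAt (fun r : ℝ => (1 + r • A).det) (LinearMap.trace ℝ E A) 0 := by
  let e := Module.finBasis ℝ E
  let N := LinearMap.toMatrix e e (A : E →ₗ[ℝ] E)
  let p := (1 + (Polynomial.X : Polynomial ℝ) • N.map Polynomial.C).det.divX.divX
  have hexpand : (fun r : ℝ => (1 + r • A).det) = fun r => 1 + N.trace * r + p.eval r * r ^ 2 := by
    funext r
    rw [← Matrix.det_one_add_smul, ContinuousLinearMap.det, ← LinearMap.det_toMatrix e]
    simp [N, Module.End.one_eq_id]
  rw [hexpand, ← LinearMap.trace_eq_matrix_trace ℝ e]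
  refine ((((hasDerivAt_id (0 : ℝ)).const_mul _).const_add 1).add
    ((p.hasDerivAt 0).mul (hasDerivAt_pow 2 (0 : ℝ)))).congr_deriv ?_
  simp

lemma isLittleO_det_one_add_sub_trace :
    (fun A : E →L[ℝ] E => (1 + A).det - 1 - LinearMap.trace ℝ E A) =o[𝓝 0] fun A => A := by
  have hdiff : DifferentiableAt ℝ (fun A : E →L[ℝ] E => (1 + A).det) 0 :=
    (differentiable_det (1 + 0)).fun_comp' 0 (differentiableAt_id.const_add (1 : E →L[ℝ] E))
  have htrace : ∀ A : E →L[ℝ] E,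
      fderiv ℝ (fun A : E →L[ℝ] E => (1 + A).det) 0 A = LinearMap.trace ℝ E A := fun A => by
    have hline : HasDerivAt (fun r : ℝ => r • A) A 0 := by
      simpa using (hasDerivAt_id (0 : ℝ)).smul_const A
    refine HasDerivAt.unique ?_ (hasDerivAt_det_one_add_smul A)
    exact HasFDerivAt.comp_hasDerivAt (0 : ℝ) (by simpa using hdiff.hasFDerivAt) hline
  have hone : (1 : E →L[ℝ] E).det = 1 := LinearMap.det_id
  simpa [htrace, hone] using hdiff.hasFDerivAt.isLittleO

lemma exists_forall_one_sub_le_abs_det_one_add_smul (L : ℝ≥0) {ε : ℝ} (hε : 0 < ε) :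
    ∃ η > 0, ∀ h : ℝ, 0 ≤ h → h < η → ∀ A : E →L[ℝ] E, ‖A‖ ≤ L → LinearMap.trace ℝ E A = 0 →
      1 - ε * h ≤ |(1 + h • A).det| := by
  obtain ⟨r, hr, hball⟩ := Metric.eventually_nhds_iff.1
    ((isLittleO_det_one_add_sub_trace (E := E)).bound (show 0 < ε / (L + 1) by positivity))
  refine ⟨r / (L + 1), by positivity, fun h h0 hh A hA htr => ?_⟩
  have hnorm : ‖h • A‖ ≤ h * (L + 1) := by
    rw [norm_smul, Real.norm_of_nonneg h0]
    gcongr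
    linarith
  have hclose := hball (y := h • A) (by
    rw [dist_zero_right]
    exact hnorm.trans_lt ((lt_div_iff₀ (by positivity)).1 hh))
  have htrace : LinearMap.trace ℝ E ((h • A : E →L[ℝ] E) : E →ₗ[ℝ] E) = 0 := by
    rw [ContinuousLinearMap.toLinearMap_smul, map_smul, htr, smul_zero]
  rw [htrace, sub_zero, Real.norm_eq_abs] at hclose
  have hbound : ε / (L + 1) * ‖h • A‖ ≤ ε * h :=
    calc ε / (L + 1) * ‖h • A‖ ≤ ε / (L + 1) * (h * (L + 1)) := by gcongr
      _ = ε * h := by field_simp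
  linarith [(abs_le.1 (hclose.trans hbound)).1, le_abs_self (1 + h • A).det]

end Determinant

section VolumeTransport

variable {E : Type*} [NormedAddCommGroup E] [NormedSpace ℝ E] {b : E → E} {h : ℝ} {U A : Set E}

lemma injOn_eulerStep {L : ℝ≥0} (hL : LipschitzOnWith L b U) (hh : 0 ≤ h) (hhL : h * L < 1) :
    InjOn (eulerStep b h) U := by
  intro x hx y hy hxy
  have hdiff : x - y = h • (b y - b x) := by
    simp only [eulerStep] at hxy
    rw [smul_sub, sub_eq_sub_iff_add_eq_add, hxy, add_comm]
  have hle : ‖x - y‖ ≤ h * L * ‖x - y‖ := by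
    calc ‖x - y‖ = h * ‖b y - b x‖ := by rw [hdiff, norm_smul, Real.norm_of_nonneg hh]
      _ ≤ h * (L * ‖x - y‖) := by
          rw [norm_sub_rev x y]
          gcongr
          exact hL.norm_sub_le hy hx
      _ = h * L * ‖x - y‖ := by ring
  exact sub_eq_zero.1 (norm_le_zero_iff.1 (by nlinarith [norm_nonneg (x - y)]))

/-- The points whose first `n` Euler iterates stay within distance `l` of their start. -/
def shortOrbits (b : E → E) (h l : ℝ) (n : ℕ) : Set E :=
  {x | ∀ j ≤ n, ‖(eulerStep b h)^[j] x - x‖ ≤ l}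

lemma isClosed_shortOrbits (hb : Continuous b) (l : ℝ) (n : ℕ) :
    IsClosed (shortOrbits b h l n) := by
  simp only [shortOrbits, ← mem_Iic, ofPred_forall]
  exact isClosed_biInter fun j _ => isClosed_le
    (((continuous_eulerStep hb h).iterate j).sub continuous_id).norm continuous_const

lemma mapsTo_iterate_eulerStep_closedBall {r l : ℝ} {n j : ℕ} (hj : j ≤ n) :
    MapsTo (eulerStep b h)^[j] (Metric.closedBall 0 r ∩ shortOrbits b h l n)
      (Metric.closedBall 0 (r + l)) := by
  rintro x ⟨hxr, hx⟩
  rw [mem_closedBall_zero_iff] at hxr ⊢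
  linarith [hx j hj, norm_le_norm_add_norm_sub' ((eulerStep b h)^[j] x) x]

variable [FiniteDimensional ℝ E] [MeasurableSpace E] [BorelSpace E]
  {μ : Measure E} [μ.IsAddHaarMeasure] {q : ℝ≥0∞}

lemma mul_setLIntegral_comp_eulerStep_le (hb : Differentiable ℝ b) (hA : MeasurableSet A)
    (hinj : InjOn (eulerStep b h) A)
    (hdet : ∀ x ∈ A, q ≤ ENNReal.ofReal |(1 + h • fderiv ℝ b x).det|) (hq : q ≠ ∞) (u : E → ℝ≥0∞) :
    q * ∫⁻ x in A, u (eulerStep b h x) ∂μ ≤ ∫⁻ x in eulerStep b h '' A, u x ∂μ := by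
  have hderiv : ∀ x ∈ A, HasFDerivWithinAt (eulerStep b h) (1 + h • fderiv ℝ b x) A x :=
    fun x _ => ((hasFDerivAt_id x).add ((hb x).hasFDerivAt.const_smul h)).hasFDerivWithinAt
  rw [lintegral_image_eq_lintegral_abs_det_fderiv_mul μ hA hderiv hinj,
    ← lintegral_const_mul' _ _ hq]
  refine setLIntegral_mono' hA fun x hx => ?_
  gcongr
  exact hdet x hx

lemma pow_mul_setLIntegral_comp_iterate_eulerStep_le (hb : Differentiable ℝ b)
    (hinj : InjOn (eulerStep b h) U)
    (hdet : ∀ x ∈ U, q ≤ ENNReal.ofReal |(1 + h • fderiv ℝ b x).det|) (hq : q ≠ ∞) (u : E → ℝ≥0∞)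
    (n : ℕ) (hA : MeasurableSet A) (hAU : ∀ j < n, MapsTo (eulerStep b h)^[j] A U) :
    q ^ n * ∫⁻ x in A, u ((eulerStep b h)^[n] x) ∂μ
      ≤ ∫⁻ x in (eulerStep b h)^[n] '' A, u x ∂μ := by
  induction n generalizing A with
  | zero => simp
  | succ n ih =>
    have hAU0 : A ⊆ U := hAU 0 n.succ_pos
    have hmeas : MeasurableSet (eulerStep b h '' A) :=
      hA.image_of_continuousOn_injOn (continuous_eulerStep hb.continuous h).continuousOn
        (hinj.mono hAU0)
    calc q ^ (n + 1) * ∫⁻ x in A, u ((eulerStep b h)^[n + 1] x) ∂μ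
        = q ^ n * (q * ∫⁻ x in A, u ((eulerStep b h)^[n] (eulerStep b h x)) ∂μ) := by
          simp only [pow_succ, mul_assoc, Function.iterate_succ_apply]
      _ ≤ q ^ n * ∫⁻ x in eulerStep b h '' A, u ((eulerStep b h)^[n] x) ∂μ := by
          gcongr
          exact mul_setLIntegral_comp_eulerStep_le hb hA (hinj.mono hAU0)
            (fun x hx => hdet x (hAU0 hx)) hq fun x => u ((eulerStep b h)^[n] x)
      _ ≤ ∫⁻ x in (eulerStep b h)^[n] '' (eulerStep b h '' A), u x ∂μ := by
          refine ih hmeas fun j hj => ?_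
          rintro _ ⟨x, hx, rfl⟩
          rw [← Function.iterate_succ_apply]
          exact hAU (j + 1) (by omega) hx
      _ = ∫⁻ x in (eulerStep b h)^[n + 1] '' A, u x ∂μ := by
          rw [← image_comp, Function.iterate_succ]

lemma eventually_mul_setLIntegral_shortOrbits_le (hb : ContDiff ℝ 1 b)
    (hdiv : ∀ x, LinearMap.trace ℝ E (fderiv ℝ b x) = 0) {S : ℝ} (hS : 0 ≤ S) (r l : ℝ)
    (u : E → ℝ≥0∞) {θ : ℝ} (hθ : θ < 1) :
    ∀ᶠ n : ℕ in atTop,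
      ENNReal.ofReal θ * ∫⁻ x in Metric.closedBall 0 r ∩ shortOrbits b (S / n) l n,
          u ((eulerStep b (S / n))^[n] x) ∂μ
        ≤ ∫⁻ x in Metric.closedBall 0 (r + l), u x ∂μ := by
  obtain ⟨L, hL⟩ := exists_lipschitzOnWith_closedBall hb (r + l)
  obtain ⟨L', hL'⟩ := exists_forall_closedBall_norm_le (hb.continuous_fderiv one_ne_zero) (r + l)
  have hε : 0 < (1 - θ) / (S + 1) := div_pos (by linarith) (by linarith)
  obtain ⟨η, hη, hdet⟩ := exists_forall_one_sub_le_abs_det_one_add_smul (E := E) L' hε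
  have hstep : Tendsto (fun n : ℕ => S / n) atTop (𝓝 0) := tendsto_const_div_atTop_nhds_zero_nat S
  have hstepL : Tendsto (fun n : ℕ => S / n * L) atTop (𝓝 0) := by simpa using hstep.mul_const _
  have hstepε : Tendsto (fun n : ℕ => (1 - θ) / (S + 1) * (S / n)) atTop (𝓝 0) := by
    simpa using hstep.const_mul _
  filter_upwards [hstep.eventually_lt_const hη, hstepL.eventually_lt_const one_pos,
    hstepε.eventually_lt_const one_pos, eventually_gt_atTop 0] with n hnη hnL hnε hn0
  set ε := (1 - θ) / (S + 1)
  have hθn : θ ≤ (1 - ε * (S / n)) ^ n := by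
    have hbernoulli := one_add_mul_le_pow (a := -(ε * (S / n))) (by linarith) n
    have hεS : ε * S + ε = 1 - θ := by simp only [ε]; field_simp
    have hcancel : (n : ℝ) * -(ε * (S / n)) = -(ε * S) := by field_simp
    rw [hcancel, ← sub_eq_add_neg, ← sub_eq_add_neg] at hbernoulli
    linarith
  calc ENNReal.ofReal θ * ∫⁻ x in Metric.closedBall 0 r ∩ shortOrbits b (S / n) l n,
          u ((eulerStep b (S / n))^[n] x) ∂μ
      ≤ ENNReal.ofReal (1 - ε * (S / n)) ^ n *
          ∫⁻ x in Metric.closedBall 0 r ∩ shortOrbits b (S / n) l n,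
            u ((eulerStep b (S / n))^[n] x) ∂μ := by
        rw [← ENNReal.ofReal_pow (by linarith)]
        gcongr
    _ ≤ ∫⁻ x in (eulerStep b (S / n))^[n] '' (Metric.closedBall 0 r ∩ shortOrbits b (S / n) l n),
          u x ∂μ :=
        pow_mul_setLIntegral_comp_iterate_eulerStep_le (hb.differentiable one_ne_zero)
          (injOn_eulerStep hL (by positivity) hnL)
          (fun x hx => ENNReal.ofReal_le_ofReal (hdet _ (by positivity) hnη _ (hL' x hx) (hdiv x)))
          ENNReal.ofReal_ne_top u n
          (measurableSet_closedBall.inter (isClosed_shortOrbits hb.continuous l n).measurableSet)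
          fun j hj => mapsTo_iterate_eulerStep_closedBall hj.le
    _ ≤ ∫⁻ x in Metric.closedBall 0 (r + l), u x ∂μ :=
        lintegral_mono_set (mapsTo_iterate_eulerStep_closedBall le_rfl).image_subset

lemma limsup_setLIntegral_shortOrbits_le (hb : ContDiff ℝ 1 b)
    (hdiv : ∀ x, LinearMap.trace ℝ E (fderiv ℝ b x) = 0) {S : ℝ} (hS : 0 ≤ S) (r l : ℝ)
    (u : E → ℝ≥0∞) :
    limsup (fun n : ℕ => ∫⁻ x in Metric.closedBall 0 r ∩ shortOrbits b (S / n) l n,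
        u ((eulerStep b (S / n))^[n] x) ∂μ) atTop
      ≤ ∫⁻ x in Metric.closedBall 0 (r + l), u x ∂μ := by
  set J := ∫⁻ x in Metric.closedBall 0 (r + l), u x ∂μ
  have hlim : Tendsto (fun θ : ℝ => (ENNReal.ofReal θ)⁻¹ * J) (𝓝[<] 1) (𝓝 J) := by
    have hinv : Tendsto (fun θ : ℝ => (ENNReal.ofReal θ)⁻¹) (𝓝[<] 1) (𝓝 1) := by
      have := (ENNReal.continuous_ofReal.tendsto 1).inv
      simpa using this.mono_left nhdsWithin_le_nhds
    simpa using ENNReal.Tendsto.mul_const hinv (Or.inl one_ne_zero)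
  refine ge_of_tendsto hlim ?_
  filter_upwards [Ioo_mem_nhdsLT one_pos] with θ hθ
  refine limsup_le_of_le (by isBoundedDefault) ?_
  filter_upwards [eventually_mul_setLIntegral_shortOrbits_le (μ := μ) hb hdiv hS r l u hθ.2]
    with n hn
  rwa [mul_comm, ← div_eq_mul_inv,
    ENNReal.le_div_iff_mul_le (Or.inl (by simpa using hθ.1)) (Or.inl ENNReal.ofReal_ne_top),
    mul_comm]

end VolumeTransport

section SolenoidalFields

variable {E : Type*} [NormedAddCommGroup E] [NormedSpace ℝ E]

/-- Continuously differentiable, divergence-free vector fields; the divergence is the trace of the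
derivative. -/
def IsSolenoidal (f : E → E) : Prop :=
  ContDiff ℝ 1 f ∧ ∀ x, LinearMap.trace ℝ E (fderiv ℝ f x) = 0

variable (E) in
/-- The space of solenoidal fields, with the σ-algebra generated by the point evaluations. -/
abbrev SolenoidalField : Type _ := {f : E → E // IsSolenoidal f}

namespace SolenoidalField

lemma contDiff (f : SolenoidalField E) : ContDiff ℝ 1 f.1 := f.2.1

lemma continuous (f : SolenoidalField E) : Continuous f.1 := f.contDiff.continuous

lemma differentiable (f : SolenoidalField E) : Differentiable ℝ f.1 :=
  f.contDiff.differentiable one_ne_zero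

/-- The field `f` seen from the point `x`. -/
def translate (x : E) (f : SolenoidalField E) : SolenoidalField E :=
  ⟨fun y => f.1 (x + y), f.contDiff.comp (contDiff_const.add contDiff_id), fun y => by
    rw [fderiv_comp_add_left]
    exact f.2.2 (x + y)⟩

/-- The field `v + δ f`. -/
def addSMul (v : E) (δ : ℝ) (f : SolenoidalField E) : SolenoidalField E :=
  ⟨fun y => v + δ • f.1 y, contDiff_const.add (f.contDiff.const_smul δ), fun y => by
    rw [fderiv_const_add, fderiv_fun_const_smul (f.differentiable y),
      ContinuousLinearMap.toLinearMap_smul, map_smul, f.2.2 y, smul_zero]⟩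

@[simp] lemma translate_apply (x y : E) (f : SolenoidalField E) :
    (f.translate x).1 y = f.1 (x + y) := rfl

@[simp] lemma addSMul_apply (v y : E) (δ : ℝ) (f : SolenoidalField E) :
    (f.addSMul v δ).1 y = v + δ • f.1 y := rfl

lemma translate_translate (x y : E) (f : SolenoidalField E) :
    (f.translate y).translate x = f.translate (y + x) :=
  Subtype.ext (funext fun z => by simp only [translate_apply, add_assoc])

lemma translate_addSMul (x v : E) (δ : ℝ) (f : SolenoidalField E) :
    (f.addSMul v δ).translate x = (f.translate x).addSMul v δ := rfl

lemma addSMul_addSMul_inv (v : E) {δ : ℝ} (hδ : δ ≠ 0) (f : SolenoidalField E) :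
    (f.addSMul v δ).addSMul (-(δ⁻¹ • v)) δ⁻¹ = f :=
  Subtype.ext (funext fun z => by
    simp only [addSMul_apply, smul_add, smul_smul, inv_mul_cancel₀ hδ, one_smul,
      neg_add_cancel_left])

lemma add_iterate_eulerStep_translate (f : SolenoidalField E) (h : ℝ) (x y : E) (n : ℕ) :
    x + (eulerStep (f.translate x).1 h)^[n] y = (eulerStep f.1 h)^[n] (x + y) := by
  induction n with
  | zero => rfl
  | succ n ih =>
    rw [Function.iterate_succ_apply', Function.iterate_succ_apply', ← ih]
    simp only [eulerStep, translate_apply, add_assoc]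

variable [MeasurableSpace E]

lemma measurable_apply (x : E) : Measurable fun f : SolenoidalField E => f.1 x :=
  (measurable_pi_apply x).comp measurable_subtype_coe

lemma measurable_of_apply {β : Type*} [MeasurableSpace β] {g : β → SolenoidalField E}
    (h : ∀ x, Measurable fun b => (g b).1 x) : Measurable g :=
  Measurable.subtype_mk (measurable_pi_lambda _ h)

lemma measure_ext_of_restrict {μ ν : Measure (SolenoidalField E)} [IsFiniteMeasure ν]
    (h : ∀ I : Finset E, μ.map (fun f => I.restrict f.1) = ν.map (fun f => I.restrict f.1)) :
    μ = ν := by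
  have hval : Measurable (Subtype.val : SolenoidalField E → E → E) := measurable_subtype_coe
  have hmap : μ.map Subtype.val = ν.map (Subtype.val : SolenoidalField E → E → E) := by
    refine IsProjectiveLimit.unique (P := fun I => (ν.map Subtype.val).map I.restrict)
      (fun I => ?_) fun I => rfl
    beta_reduce
    rw [Measure.map_map (Finset.measurable_restrict _) hval,
      Measure.map_map (Finset.measurable_restrict _) hval]
    exact h I
  ext s ⟨t, ht, hts⟩
  rw [← hts, ← Measure.map_apply hval ht, ← Measure.map_apply hval ht, hmap]

variable [BorelSpace E]

lemma measurable_addSMul (v : E) (δ : ℝ) :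
    Measurable fun f : SolenoidalField E => f.addSMul v δ :=
  measurable_of_apply fun x => ((measurable_apply x).const_smul δ).const_add v

variable [FiniteDimensional ℝ E]

lemma measurable_eval : Measurable fun p : SolenoidalField E × E => p.1.1 p.2 :=
  (measurable_uncurry_of_continuous_of_measurable (u := fun x (f : SolenoidalField E) => f.1 x)
    (fun f => f.continuous) measurable_apply).comp measurable_swap

lemma measurable_translate : Measurable fun p : E × SolenoidalField E => p.2.translate p.1 :=
  measurable_of_apply fun x =>
    measurable_eval.comp (measurable_snd.prodMk (measurable_fst.add_const x))

lemma measurable_iterate_eulerStep (h : ℝ) (n : ℕ) :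
    Measurable fun p : SolenoidalField E × E => (eulerStep p.1.1 h)^[n] p.2 := by
  induction n with
  | zero => exact measurable_snd
  | succ n ih =>
    simp only [Function.iterate_succ_apply']
    exact ih.add ((measurable_eval.comp (measurable_fst.prodMk ih)).const_smul h)

/-- The law `μ` of a random field is invariant under translations of space. -/
def IsStationary (μ : Measure (SolenoidalField E)) : Prop := ∀ x, μ.map (translate x) = μ

lemma IsStationary.lintegral_translate {μ : Measure (SolenoidalField E)} (hμ : IsStationary μ)
    {φ : SolenoidalField E → ℝ≥0∞} (hφ : Measurable φ) (x : E) :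
    ∫⁻ f, φ (f.translate x) ∂μ = ∫⁻ f, φ f ∂μ := by
  conv_rhs => rw [← hμ x]
  exact (lintegral_map hφ (measurable_translate.comp measurable_prodMk_left)).symm

lemma IsStationary.map_addSMul {μ : Measure (SolenoidalField E)} (hμ : IsStationary μ) (v : E)
    (δ : ℝ) : IsStationary (μ.map fun f => f.addSMul v δ) := by
  intro x
  have hx : Measurable (translate x : SolenoidalField E → _) :=
    measurable_translate.comp measurable_prodMk_left
  conv_rhs => rw [← hμ x]
  rw [Measure.map_map hx (measurable_addSMul v δ), Measure.map_map (measurable_addSMul v δ) hx]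
  rfl

end SolenoidalField

end SolenoidalFields

section MarginalLaws

variable {E : Type*} [NormedAddCommGroup E] [InnerProductSpace ℝ E] [FiniteDimensional ℝ E]

lemma exists_forall_eq_sum_inner {ι : Type*} [Fintype ι] (L : StrongDual ℝ (ι → E)) :
    ∃ c : ι → E, ∀ z, L z = ∑ j, ⟪c j, z j⟫ := by
  classical
  refine ⟨fun j => (InnerProductSpace.toDual ℝ E).symm
    (L.comp (ContinuousLinearMap.single ℝ (fun _ => E) j)), fun z => ?_⟩
  simp only [InnerProductSpace.toDual_symm_apply]
  conv_lhs => rw [← Finset.univ_sum_single z, map_sum]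
  rfl

variable [MeasurableSpace E] [BorelSpace E]

/-- The Cramér–Wold device for random fields. -/
lemma SolenoidalField.measure_ext_of_sum_inner {μ ν : Measure (SolenoidalField E)}
    [IsFiniteMeasure μ] [IsFiniteMeasure ν]
    (h : ∀ (N : ℕ) (x c : Fin N → E), μ.map (fun f => ∑ j, ⟪c j, f.1 (x j)⟫) =
      ν.map (fun f => ∑ j, ⟪c j, f.1 (x j)⟫)) : μ = ν := by
  refine measure_ext_of_restrict fun I => Measure.ext_of_charFunDual (funext fun L => ?_)
  have hmeas : Measurable fun f : SolenoidalField E => I.restrict f.1 :=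
    measurable_pi_lambda _ fun i => measurable_apply _
  obtain ⟨c, hc⟩ := exists_forall_eq_sum_inner L
  have hL : ∀ f : SolenoidalField E, L (I.restrict f.1) =
      ∑ j, ⟪c (I.equivFin.symm j), f.1 (I.equivFin.symm j)⟫ := fun f => by
    rw [hc, ← I.equivFin.symm.sum_comp]
    rfl
  rw [charFunDual_eq_charFun_map_one, charFunDual_eq_charFun_map_one,
    Measure.map_map L.continuous.measurable hmeas, Measure.map_map L.continuous.measurable hmeas]
  simp only [Function.comp_def, hL, h]

end MarginalLaws

section LagrangianStationarity

open scoped BoundedContinuousFunction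

variable {E : Type*} [NormedAddCommGroup E] [NormedSpace ℝ E]

/-- The observable `φ` of the environment seen after time `S` from the `n`-step Euler
approximation of the trajectory started at `x`, cut off when the approximation travels more
than `l`. -/
noncomputable def eulerObservable (φ : SolenoidalField E → ℝ≥0∞) (S l : ℝ) (n : ℕ)
    (f : SolenoidalField E) : E → ℝ≥0∞ :=
  (shortOrbits f.1 (S / n) l n).indicator
    fun x => φ (f.translate ((eulerStep f.1 (S / n))^[n] x))

variable {φ : SolenoidalField E → ℝ≥0∞} {S l : ℝ} {n : ℕ}

lemma eulerObservable_translate (f : SolenoidalField E) (x : E) :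
    eulerObservable φ S l n (f.translate x) 0 = eulerObservable φ S l n f x := by
  have hiter : ∀ j, (eulerStep f.1 (S / n))^[j] x =
      x + (eulerStep (f.translate x).1 (S / n))^[j] 0 := fun j => by
    rw [f.add_iterate_eulerStep_translate, add_zero]
  simp only [eulerObservable, shortOrbits, indicator, mem_ofPred_eq, hiter,
    SolenoidalField.translate_translate, sub_zero, add_sub_cancel_left]

lemma eulerObservable_le {C : ℝ≥0∞} (hφ : ∀ f, φ f ≤ C) (f : SolenoidalField E) (x : E) :
    eulerObservable φ S l n f x ≤ C := by
  rw [eulerObservable]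
  exact indicator_apply_le' (fun _ => hφ _) fun _ => zero_le

variable [FiniteDimensional ℝ E]

lemma tendsto_iterate_eulerStep {b : E → E} (hb : ContDiff ℝ 1 b) (hS : 0 ≤ S) {X : ℝ → E}
    (hX : ∀ s ∈ Icc 0 S, HasDerivAt X (b (X s)) s) :
    Tendsto (fun n : ℕ => (eulerStep b (S / n))^[n] (X 0)) atTop (𝓝 (X S)) := by
  refine Metric.tendsto_nhds.2 fun ε hε => ?_
  filter_upwards [eventually_norm_iterate_eulerStep_sub_le hb hS hX (half_pos hε),
    eventually_gt_atTop 0] with n hn hn0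
  have hend := hn n le_rfl
  rw [mul_div_cancel₀ S (by positivity)] at hend
  rw [dist_eq_norm]
  linarith

lemma eventually_zero_mem_shortOrbits {b : E → E} (hb : ContDiff ℝ 1 b) (hS : 0 ≤ S) {X : ℝ → E}
    (hX0 : X 0 = 0) (hX : ∀ s ∈ Icc 0 S, HasDerivAt X (b (X s)) s) {R : ℝ}
    (hR : ∀ s ∈ Icc 0 S, ‖X s‖ ≤ R) (hl : R + 1 ≤ l) :
    ∀ᶠ n : ℕ in atTop, (0 : E) ∈ shortOrbits b (S / n) l n := by
  filter_upwards [eventually_norm_iterate_eulerStep_sub_le hb hS hX one_pos,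
    eventually_gt_atTop 0] with n hn hn0 j hj
  have hjS : (j * (S / n) : ℝ) ∈ Icc 0 S := by
    have hjn : (j : ℝ) ≤ n := by exact_mod_cast hj
    refine ⟨by positivity, ?_⟩
    rw [mul_div_left_comm]
    exact mul_le_of_le_one_right hS (div_le_one_of_le₀ hjn (by positivity))
  have hclose := hn j hj
  rw [hX0] at hclose
  rw [sub_zero]
  linarith [hR _ hjS, norm_le_norm_add_norm_sub' ((eulerStep b (S / n))^[j] 0) (X (j * (S / n)))]

/-- The cut-off is inactive for large `l` because trajectories are bounded on `[0, S]`. -/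
lemma le_liminf_liminf_eulerObservable (hS : 0 ≤ S) {f : SolenoidalField E}
    (hφ : Continuous fun x => φ (f.translate x)) {X : ℝ → E} (hX0 : X 0 = 0)
    (hX : ∀ s ∈ Icc 0 S, HasDerivAt X (f.1 (X s)) s) :
    φ (f.translate (X S)) ≤
      liminf (fun l : ℕ => liminf (fun n => eulerObservable φ S l n f 0) atTop) atTop := by
  obtain ⟨R, hR⟩ := isCompact_Icc.exists_bound_of_continuousOn
    (fun s hs => (hX s hs).continuousAt.continuousWithinAt : ContinuousOn X (Icc 0 S))
  refine le_liminf_of_le (by isBoundedDefault) ?_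
  filter_upwards [eventually_ge_atTop ⌈R + 1⌉₊] with l hl
  have hlim := (hφ.tendsto (X S)).comp (tendsto_iterate_eulerStep f.contDiff hS hX)
  refine (Tendsto.liminf_eq (hlim.congr' ?_)).ge
  filter_upwards [eventually_zero_mem_shortOrbits f.contDiff hS hX0 hX hR (Nat.ceil_le.1 hl)]
    with n hn
  rw [eulerObservable, indicator_of_mem hn, Function.comp_apply, hX0]

variable [MeasurableSpace E] [BorelSpace E]

lemma measurable_eulerObservable (hφ : Measurable φ) :
    Measurable fun p : SolenoidalField E × E => eulerObservable φ S l n p.1 p.2 := by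
  have hset : MeasurableSet {p : SolenoidalField E × E | p.2 ∈ shortOrbits p.1.1 (S / n) l n} := by
    have hInter : {p : SolenoidalField E × E | p.2 ∈ shortOrbits p.1.1 (S / n) l n} =
        ⋂ j ≤ n, {p | ‖(eulerStep p.1.1 (S / n))^[j] p.2 - p.2‖ ≤ l} := by
      ext p
      simp [shortOrbits]
    rw [hInter]
    exact MeasurableSet.iInter fun j => MeasurableSet.iInter fun _ => measurableSet_le
      ((SolenoidalField.measurable_iterate_eulerStep _ j).sub measurable_snd).norm
      measurable_const
  exact (hφ.comp (SolenoidalField.measurable_translate.comp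
    ((SolenoidalField.measurable_iterate_eulerStep _ n).prodMk measurable_fst))).indicator hset

lemma measurable_eulerObservable_left (hφ : Measurable φ) (x : E) :
    Measurable fun f : SolenoidalField E => eulerObservable φ S l n f x :=
  Measurable.of_uncurry_right (f := fun f x => eulerObservable φ S l n f x)
    (measurable_eulerObservable hφ)

lemma tendsto_measure_closedBall_div (m : Measure E) [m.IsAddHaarMeasure] (hl : 0 ≤ l) :
    Tendsto (fun n : ℕ => m (Metric.closedBall 0 ((n : ℝ) + 1 + l)) /
      m (Metric.closedBall 0 ((n : ℝ) + 1))) atTop (𝓝 1) := by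
  have hratio : ∀ n : ℕ, m (Metric.closedBall 0 ((n : ℝ) + 1 + l)) /
      m (Metric.closedBall 0 ((n : ℝ) + 1)) =
        ENNReal.ofReal ((1 + l * (1 / ((n : ℝ) + 1))) ^ Module.finrank ℝ E) := by
    intro n
    rw [Measure.addHaar_closedBall m _ (by positivity),
      Measure.addHaar_closedBall m _ (by positivity),
      ENNReal.mul_div_mul_right _ _ (Metric.measure_ball_pos m _ one_pos).ne'
        measure_ball_lt_top.ne,
      ← ENNReal.ofReal_div_of_pos (by positivity), ← div_pow]
    congr 2
    field_simp
  simp_rw [hratio]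
  have hlim := ((tendsto_one_div_add_atTop_nhds_zero_nat (𝕜 := ℝ)).const_mul l).const_add 1
  simpa using ENNReal.tendsto_ofReal (hlim.pow (Module.finrank ℝ E))

variable {μ : Measure (SolenoidalField E)} [IsProbabilityMeasure μ] {C : ℝ≥0}

/-- By stationarity the expectation at `0` is an expectation of a spatial average over a ball. -/
lemma limsup_lintegral_eulerObservable_mul_le (hμ : SolenoidalField.IsStationary μ) (hS : 0 ≤ S)
    (hφ : Measurable φ) (hφC : ∀ f, φ f ≤ C) (l r : ℝ) (m : Measure E) [m.IsAddHaarMeasure] :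
    limsup (fun n => ∫⁻ f, eulerObservable φ S l n f 0 ∂μ) atTop * m (Metric.closedBall 0 r) ≤
      (∫⁻ f, φ f ∂μ) * m (Metric.closedBall 0 (r + l)) := by
  have hr : m (Metric.closedBall 0 r) ≠ ∞ := measure_closedBall_lt_top.ne
  have hspread : ∀ n, m (Metric.closedBall 0 r) * ∫⁻ f, eulerObservable φ S l n f 0 ∂μ =
      ∫⁻ f, ∫⁻ x in Metric.closedBall 0 r, eulerObservable φ S l n f x ∂m ∂μ := by
    intro n
    have hshift : ∀ x, ∫⁻ f, eulerObservable φ S l n f x ∂μ =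
        ∫⁻ f, eulerObservable φ S l n f 0 ∂μ := fun x =>
      (lintegral_congr fun f => (eulerObservable_translate f x).symm).trans
        (hμ.lintegral_translate (measurable_eulerObservable_left hφ 0) x)
    rw [lintegral_lintegral_swap (measurable_eulerObservable hφ).aemeasurable]
    simp only [hshift]
    rw [setLIntegral_const, mul_comm]
  have hbound : ∀ n, ∀ᵐ f ∂μ, ∫⁻ x in Metric.closedBall 0 r, eulerObservable φ S l n f x ∂m ≤
      C * m (Metric.closedBall 0 r) := fun n => ae_of_all _ fun f =>
    (lintegral_mono fun x => eulerObservable_le hφC f x).trans_eq (setLIntegral_const _ _)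
  calc limsup (fun n => ∫⁻ f, eulerObservable φ S l n f 0 ∂μ) atTop * m (Metric.closedBall 0 r)
      = limsup (fun n => ∫⁻ f, ∫⁻ x in Metric.closedBall 0 r, eulerObservable φ S l n f x ∂m ∂μ)
          atTop := by
        rw [mul_comm, ← ENNReal.limsup_const_mul_of_ne_top hr]
        simp_rw [hspread]
    _ ≤ ∫⁻ f, limsup (fun n => ∫⁻ x in Metric.closedBall 0 r, eulerObservable φ S l n f x ∂m)
          atTop ∂μ :=
        limsup_lintegral_le _ (fun n => (measurable_eulerObservable hφ).lintegral_prod_right')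
          hbound (by simpa using ENNReal.mul_ne_top ENNReal.coe_ne_top hr)
    _ ≤ ∫⁻ f, ∫⁻ x in Metric.closedBall 0 (r + l), φ (f.translate x) ∂m ∂μ := by
        refine lintegral_mono fun f => ?_
        simp only [eulerObservable,
          setLIntegral_indicator (isClosed_shortOrbits f.continuous _ _).measurableSet,
          inter_comm (shortOrbits _ _ _ _)]
        exact limsup_setLIntegral_shortOrbits_le f.contDiff f.2.2 hS r l _
    _ = (∫⁻ f, φ f ∂μ) * m (Metric.closedBall 0 (r + l)) := by
        have hmeas : Measurable fun p : SolenoidalField E × E => φ (p.1.translate p.2) :=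
          hφ.comp (SolenoidalField.measurable_translate.comp measurable_swap)
        rw [lintegral_lintegral_swap hmeas.aemeasurable]
        simp_rw [hμ.lintegral_translate hφ]
        rw [setLIntegral_const]

lemma liminf_lintegral_eulerObservable_le (hμ : SolenoidalField.IsStationary μ) (hS : 0 ≤ S)
    (hφ : Measurable φ) (hφC : ∀ f, φ f ≤ C) (hl : 0 ≤ l) :
    liminf (fun n => ∫⁻ f, eulerObservable φ S l n f 0 ∂μ) atTop ≤ ∫⁻ f, φ f ∂μ := by
  let m : Measure E := Measure.addHaar
  have hlim : Tendsto (fun n : ℕ => (∫⁻ f, φ f ∂μ) * (m (Metric.closedBall 0 ((n : ℝ) + 1 + l)) /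
      m (Metric.closedBall 0 ((n : ℝ) + 1)))) atTop (𝓝 (∫⁻ f, φ f ∂μ)) := by
    simpa using ENNReal.Tendsto.const_mul (tendsto_measure_closedBall_div m hl)
      (Or.inl one_ne_zero)
  refine ge_of_tendsto hlim (Eventually.of_forall fun n => le_trans liminf_le_limsup ?_)
  have hn : (0 : ℝ) < n + 1 := by positivity
  rw [← mul_div_assoc, ENNReal.le_div_iff_mul_le
    (Or.inl (Metric.measure_closedBall_pos m _ hn).ne') (Or.inl measure_closedBall_lt_top.ne)]
  exact limsup_lintegral_eulerObservable_mul_le hμ hS hφ hφC l _ m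

variable {Ω : Type*} [MeasurableSpace Ω] {P : Measure Ω} [IsProbabilityMeasure P]
  {f : Ω → SolenoidalField E} {X : Ω → ℝ → E}

lemma lintegral_translate_trajectory_le (hf : Measurable f)
    (hstat : SolenoidalField.IsStationary (P.map f)) (hS : 0 ≤ S)
    (hX : ∀ᵐ ω ∂P, X ω 0 = 0 ∧ ∀ s ∈ Icc 0 S, HasDerivAt (X ω) ((f ω).1 (X ω s)) s)
    (hφ : Measurable φ) (hφC : ∀ g, φ g ≤ C)
    (hφc : ∀ g : SolenoidalField E, Continuous fun x => φ (g.translate x)) :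
    ∫⁻ ω, φ ((f ω).translate (X ω S)) ∂P ≤ ∫⁻ ω, φ (f ω) ∂P := by
  have := Measure.isProbabilityMeasure_map (μ := P) hf.aemeasurable
  have hmeas : ∀ n (l : ℝ), Measurable fun ω => eulerObservable φ S l n (f ω) 0 :=
    fun n l => (measurable_eulerObservable_left hφ 0).comp hf
  calc ∫⁻ ω, φ ((f ω).translate (X ω S)) ∂P
      ≤ ∫⁻ ω, liminf (fun l : ℕ =>
          liminf (fun n => eulerObservable φ S l n (f ω) 0) atTop) atTop ∂P :=
        lintegral_mono_ae (hX.mono fun ω hω =>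
          le_liminf_liminf_eulerObservable hS (hφc _) hω.1 hω.2)
    _ ≤ liminf (fun l : ℕ =>
          ∫⁻ ω, liminf (fun n => eulerObservable φ S l n (f ω) 0) atTop ∂P) atTop :=
        lintegral_liminf_le fun l => Measurable.liminf fun n => hmeas n l
    _ ≤ liminf (fun _ : ℕ => ∫⁻ ω, φ (f ω) ∂P) atTop := by
        refine liminf_le_liminf (Eventually.of_forall fun l => ?_)
        refine (lintegral_liminf_le fun n => hmeas n l).trans ?_
        simp only [← lintegral_map (measurable_eulerObservable_left hφ 0) hf, ← lintegral_map hφ hf]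
        exact liminf_lintegral_eulerObservable_le hstat hS hφ hφC l.cast_nonneg
    _ = ∫⁻ ω, φ (f ω) ∂P := by simp

lemma measure_eq_of_forall_lintegral_le {Y : Type*} [TopologicalSpace Y] [MeasurableSpace Y]
    [BorelSpace Y] [HasOuterApproxClosed Y] {μ ν : Measure Y} [IsProbabilityMeasure μ]
    [IsProbabilityMeasure ν] (h : ∀ g : Y →ᵇ ℝ≥0, ∫⁻ y, g y ∂μ ≤ ∫⁻ y, g y ∂ν) : μ = ν := by
  refine ext_of_forall_lintegral_eq_of_IsFiniteMeasure fun g => le_antisymm (h g) ?_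
  let c : ℝ≥0 := nndist g 0
  let g' : Y →ᵇ ℝ≥0 := BoundedContinuousFunction.const Y c - g
  have hsum : ∀ (m : Measure Y) [IsProbabilityMeasure m],
      ∫⁻ y, g y ∂m + ∫⁻ y, g' y ∂m = c := by
    intro m _
    have hpt : ∀ y, (g y : ℝ≥0∞) + g' y = c := fun y => by
      rw [← ENNReal.coe_add]
      exact congrArg _ (add_tsub_cancel_of_le
        (BoundedContinuousFunction.NNReal.upper_bound g y))
    rw [← lintegral_add_left g.continuous.measurable.coe_nnreal_ennreal]
    simp [hpt]
  have hfin : ∫⁻ y, g' y ∂ν ≠ ∞ :=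
    ne_top_of_le_ne_top ENNReal.coe_ne_top (le_add_self.trans_eq (hsum ν))
  refine (ENNReal.add_le_add_iff_right hfin).1 ?_
  calc ∫⁻ y, g y ∂ν + ∫⁻ y, g' y ∂ν = ∫⁻ y, g y ∂μ + ∫⁻ y, g' y ∂μ := by rw [hsum ν, hsum μ]
    _ ≤ ∫⁻ y, g y ∂μ + ∫⁻ y, g' y ∂ν := add_le_add le_rfl (h g')

theorem map_translate_trajectory (hf : Measurable f)
    (hstat : SolenoidalField.IsStationary (P.map f)) (hS : 0 ≤ S)
    (hXm : Measurable fun ω => X ω S)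
    (hX : ∀ᵐ ω ∂P, X ω 0 = 0 ∧ ∀ s ∈ Icc 0 S, HasDerivAt (X ω) ((f ω).1 (X ω s)) s) :
    P.map (fun ω => (f ω).translate (X ω S)) = P.map f := by
  have htrans : Measurable fun ω => (f ω).translate (X ω S) :=
    SolenoidalField.measurable_translate.comp (hXm.prodMk hf)
  have := Measure.isProbabilityMeasure_map (μ := P) hf.aemeasurable
  have := Measure.isProbabilityMeasure_map (μ := P) htrans.aemeasurable
  refine SolenoidalField.measure_ext_of_restrict fun I => ?_
  have hI : Measurable fun g : SolenoidalField E => I.restrict g.1 :=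
    measurable_pi_lambda _ fun i => SolenoidalField.measurable_apply _
  have := Measure.isProbabilityMeasure_map (μ := P.map f) hI.aemeasurable
  have := Measure.isProbabilityMeasure_map (μ := P.map fun ω => (f ω).translate (X ω S))
    hI.aemeasurable
  refine measure_eq_of_forall_lintegral_le fun g => ?_
  have hg : Measurable fun z => (g z : ℝ≥0∞) := g.continuous.measurable.coe_nnreal_ennreal
  have hgI : Measurable fun h : SolenoidalField E => (g (I.restrict h.1) : ℝ≥0∞) := hg.comp hI
  rw [lintegral_map hg hI, lintegral_map hg hI, lintegral_map hgI htrans, lintegral_map hgI hf]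
  refine lintegral_translate_trajectory_le (φ := fun h => g (I.restrict h.1)) (C := nndist g 0)
    hf hstat hS hX hgI
    (fun h => ENNReal.coe_le_coe.2 (BoundedContinuousFunction.NNReal.upper_bound g _)) fun h => ?_
  exact ENNReal.continuous_coe.comp (g.continuous.comp (continuous_pi fun i =>
    h.continuous.comp (continuous_add_const (i : E))))

/-- For `δ ≠ 0` the field is recovered from the drift `v + δ f`, so its environment is stationary
too. -/
theorem map_translate_trajectory_addSMul (hf : Measurable f)
    (hstat : SolenoidalField.IsStationary (P.map f)) (v : E) {δ : ℝ} (hδ : δ ≠ 0) (hS : 0 ≤ S)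
    (hXm : Measurable fun ω => X ω S)
    (hX : ∀ᵐ ω ∂P, X ω 0 = 0 ∧ ∀ s ∈ Icc 0 S, HasDerivAt (X ω) (v + δ • (f ω).1 (X ω s)) s) :
    P.map (fun ω => (f ω).translate (X ω S)) = P.map f := by
  have hdrift : Measurable fun ω => (f ω).addSMul v δ :=
    (SolenoidalField.measurable_addSMul v δ).comp hf
  have hdrift_stat : SolenoidalField.IsStationary (P.map fun ω => (f ω).addSMul v δ) := by
    have := hstat.map_addSMul v δ
    rwa [Measure.map_map (SolenoidalField.measurable_addSMul v δ) hf] at this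
  have htrans : Measurable fun ω => ((f ω).addSMul v δ).translate (X ω S) :=
    SolenoidalField.measurable_translate.comp (hXm.prodMk hdrift)
  have hmap := congrArg (Measure.map fun g => g.addSMul (-(δ⁻¹ • v)) δ⁻¹)
    (map_translate_trajectory hdrift hdrift_stat hS hXm hX)
  rw [Measure.map_map (SolenoidalField.measurable_addSMul _ _) htrans,
    Measure.map_map (SolenoidalField.measurable_addSMul _ _) hdrift] at hmap
  simpa only [Function.comp_def, SolenoidalField.translate_addSMul,
    SolenoidalField.addSMul_addSMul_inv v hδ] using hmap

end LagrangianStationarity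

section FiniteAverages

open scoped AddMonoidAlgebra

variable {E V W : Type*} [AddCommGroup E] [AddCommGroup V] [Module ℝ V] [AddCommGroup W]
  [Module ℝ W]

/-- The convolution `x ↦ ∑ z, w z • f (x + z)` of `f` with finitely many point masses. Weights
live in the group algebra, whose product is the composition of averages. -/
noncomputable def pointAverage (w : ℝ[E]) (f : E → V) (x : E) : V :=
  Finsupp.linearCombination ℝ (fun z => f (x + z)) w.coeff

lemma pointAverage_eq_sum (w : ℝ[E]) (f : E → V) (x : E) :
    pointAverage w f x = ∑ z ∈ w.coeff.support, w.coeff z • f (x + z) := rfl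

lemma pointAverage_add_weight (w w' : ℝ[E]) (f : E → V) (x : E) :
    pointAverage (w + w') f x = pointAverage w f x + pointAverage w' f x := by
  simp only [pointAverage, AddMonoidAlgebra.coeff_add, map_add]

lemma pointAverage_smul_weight (c : ℝ) (w : ℝ[E]) (f : E → V) (x : E) :
    pointAverage (c • w) f x = c • pointAverage w f x := by
  simp only [pointAverage, AddMonoidAlgebra.coeff_smul, map_smul]

lemma pointAverage_single (z : E) (c : ℝ) (f : E → V) (x : E) :
    pointAverage (AddMonoidAlgebra.single z c) f x = c • f (x + z) := by
  simp only [pointAverage, AddMonoidAlgebra.coeff_single, Finsupp.linearCombination_single]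

lemma pointAverage_one (f : E → V) (x : E) : pointAverage 1 f x = f x := by
  rw [AddMonoidAlgebra.one_def, pointAverage_single, one_smul, add_zero]

lemma pointAverage_single_mul (z : E) (w : ℝ[E]) (f : E → V) (x : E) :
    pointAverage (AddMonoidAlgebra.single z 1 * w) f x = pointAverage w f (x + z) := by
  induction w using AddMonoidAlgebra.induction_linear with
  | zero => simp [pointAverage]
  | add w w' hw hw' => rw [mul_add, pointAverage_add_weight, pointAverage_add_weight, hw, hw']
  | single y c =>
    rw [AddMonoidAlgebra.single_mul_single, pointAverage_single, pointAverage_single, one_mul,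
      add_assoc]

lemma pointAverage_comp_add_left (w : ℝ[E]) (f : E → V) (x y : E) :
    pointAverage w (fun z => f (x + z)) y = pointAverage w f (x + y) := by
  simp only [pointAverage, add_assoc]

lemma map_pointAverage (L : V →ₗ[ℝ] W) (w : ℝ[E]) (f : E → V) (x : E) :
    L (pointAverage w f x) = pointAverage w (fun y => L (f y)) x := by
  simp only [pointAverage_eq_sum, map_sum, map_smul]

end FiniteAverages

section DifferenceQuotient

open scoped AddMonoidAlgebra

variable {E V : Type*} [NormedAddCommGroup E] [NormedSpace ℝ E] [NormedAddCommGroup V]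
  [NormedSpace ℝ V]

/-- Weights of the difference quotient of step `1 / n` in the direction `u`. -/
noncomputable def differenceQuotient (u : E) (n : ℕ) : ℝ[E] :=
  (n : ℝ) • (AddMonoidAlgebra.single ((n : ℝ)⁻¹ • u) 1 - 1)

lemma pointAverage_differenceQuotient_mul (u : E) (n : ℕ) (w : ℝ[E]) (f : E → V) (x : E) :
    pointAverage (differenceQuotient u n * w) f x =
      (n : ℝ) • (pointAverage w f (x + (n : ℝ)⁻¹ • u) - pointAverage w f x) := by
  rw [differenceQuotient, smul_mul_assoc, pointAverage_smul_weight, sub_mul, one_mul,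
    sub_eq_add_neg, ← neg_one_smul ℝ w, pointAverage_add_weight, pointAverage_smul_weight,
    pointAverage_single_mul, neg_one_smul, ← sub_eq_add_neg]

lemma contDiff_pointAverage {n : WithTop ℕ∞} {f : E → V} (hf : ContDiff ℝ n f) (w : ℝ[E]) :
    ContDiff ℝ n (pointAverage w f) := by
  have hsum : pointAverage w f = fun x => ∑ z ∈ w.coeff.support, w.coeff z • f (x + z) :=
    funext (pointAverage_eq_sum w f)
  rw [hsum]
  fun_prop

lemma tendsto_pointAverage_differenceQuotient_mul {f : E → V} (hf : ContDiff ℝ 1 f) (w : ℝ[E])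
    (u x : E) : Tendsto (fun n : ℕ => pointAverage (differenceQuotient u n * w) f x) atTop
      (𝓝 (fderiv ℝ (pointAverage w f) x u)) := by
  simp only [pointAverage_differenceQuotient_mul]
  exact (((contDiff_pointAverage hf w).differentiable one_ne_zero x).hasFDerivAt.lim_real u).comp
    tendsto_natCast_atTop_atTop

end DifferenceQuotient

section Symbol

open scoped AddMonoidAlgebra

variable {E : Type*} [NormedAddCommGroup E] [InnerProductSpace ℝ E]

/-- The Fourier multiplier `k ↦ ∑ z, w z exp (i⟪k, z⟫)` of the average with weights `w`. -/
noncomputable def symbol (k : E) : ℝ[E] →ₐ[ℝ] ℂ :=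
  AddMonoidAlgebra.lift ℝ ℂ E
    { toFun := fun z => Complex.exp (Complex.I * ⟪k, z.toAdd⟫)
      map_one' := by simp
      map_mul' := fun y z => by
        rw [← Complex.exp_add, ← mul_add, toAdd_mul, inner_add_right, Complex.ofReal_add] }

lemma symbol_single (k z : E) (c : ℝ) :
    symbol k (AddMonoidAlgebra.single z c) = c * Complex.exp (Complex.I * ⟪k, z⟫) :=
  AddMonoidAlgebra.lift_single _ _ _

lemma symbol_eq_sum (k : E) (w : ℝ[E]) :
    symbol k w = ∑ z ∈ w.coeff.support, w.coeff z * Complex.exp (Complex.I * ⟪k, z⟫) :=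
  AddMonoidAlgebra.lift_apply _ _

lemma continuous_symbol (w : ℝ[E]) : Continuous fun k => symbol k w := by
  simp only [symbol_eq_sum]
  fun_prop

lemma exists_norm_symbol_le (w : ℝ[E]) : ∃ C, ∀ k, ‖symbol k w‖ ≤ C := by
  refine ⟨∑ z ∈ w.coeff.support, |w.coeff z|, fun k => ?_⟩
  rw [symbol_eq_sum]
  refine norm_sum_le_of_le _ fun z _ => ?_
  rw [norm_mul, mul_comm Complex.I, Complex.norm_exp_ofReal_mul_I, mul_one, Complex.norm_real,
    Real.norm_eq_abs]

lemma norm_symbol_sq (k : E) (w : ℝ[E]) :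
    ‖symbol k w‖ ^ 2 = ∑ y ∈ w.coeff.support, ∑ z ∈ w.coeff.support,
      w.coeff y * w.coeff z * Real.cos ⟪k, y - z⟫ := by
  have hre : (symbol k w).re = ∑ z ∈ w.coeff.support, w.coeff z * Real.cos ⟪k, z⟫ := by
    simp [symbol_eq_sum, mul_comm Complex.I, Complex.exp_ofReal_mul_I_re]
  have him : (symbol k w).im = ∑ z ∈ w.coeff.support, w.coeff z * Real.sin ⟪k, z⟫ := by
    simp [symbol_eq_sum, mul_comm Complex.I, Complex.exp_ofReal_mul_I_im]
  rw [Complex.sq_norm, Complex.normSq_apply, hre, him, Finset.sum_mul_sum, Finset.sum_mul_sum,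
    ← Finset.sum_add_distrib]
  refine Finset.sum_congr rfl fun y _ => ?_
  rw [← Finset.sum_add_distrib]
  refine Finset.sum_congr rfl fun z _ => ?_
  rw [inner_sub_right, Real.cos_sub]
  ring

lemma norm_symbol_differenceQuotient_le (k u : E) (n : ℕ) :
    ‖symbol k (differenceQuotient u n)‖ ≤ |⟪k, u⟫| := by
  rcases eq_or_ne n 0 with rfl | hn
  · simp [differenceQuotient]
  have hn' : (0 : ℝ) < n := by positivity
  rw [differenceQuotient, map_smul, map_sub, map_one, symbol_single, Complex.ofReal_one, one_mul,
    norm_smul, Real.norm_of_nonneg hn'.le]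
  calc (n : ℝ) * ‖Complex.exp (Complex.I * ⟪k, (n : ℝ)⁻¹ • u⟫) - 1‖
      ≤ n * ‖⟪k, (n : ℝ)⁻¹ • u⟫‖ := by
        gcongr
        exact Real.norm_exp_I_mul_ofReal_sub_one_le
    _ = |⟪k, u⟫| := by
        rw [inner_smul_right, norm_mul, norm_inv, Real.norm_of_nonneg hn'.le,
          mul_inv_cancel_left₀ hn'.ne', Real.norm_eq_abs]

end Symbol

section BinomialKernel

open scoped AddMonoidAlgebra

variable {E ι : Type*} [NormedAddCommGroup E] [InnerProductSpace ℝ E] [Fintype ι]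

/-- The weights of an `n`-fold lazy random walk in each of the directions `u l`: an average over
a region of diameter of order `√n` whose symbol is real. -/
noncomputable def binomialKernel (u : ι → E) (n : ℕ) : ℝ[E] :=
  ∏ l, (AddMonoidAlgebra.single (u l) (1 / 4) + AddMonoidAlgebra.single 0 (1 / 2) +
    AddMonoidAlgebra.single (-u l) (1 / 4)) ^ n

/-- The symbol of `binomialKernel u n`. -/
noncomputable def binomialSymbol (u : ι → E) (n : ℕ) (k : E) : ℝ :=
  ∏ l, ((1 + Real.cos ⟪k, u l⟫) / 2) ^ n

variable (u : ι → E) (n : ℕ) (k : E)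

lemma symbol_binomialKernel : symbol k (binomialKernel u n) = binomialSymbol u n k := by
  rw [binomialKernel, binomialSymbol, map_prod, Complex.ofReal_prod]
  refine Finset.prod_congr rfl fun l _ => ?_
  rw [map_pow, map_add, map_add, symbol_single, symbol_single, symbol_single, Complex.ofReal_pow]
  congr 1
  push_cast
  rw [Complex.cos, inner_neg_right, inner_zero_right]
  simp only [Complex.ofReal_zero, mul_zero, Complex.exp_zero, Complex.ofReal_neg]
  ring_nf

lemma half_one_add_cos_mem_Icc (x : ℝ) : (1 + Real.cos x) / 2 ∈ Icc (0 : ℝ) 1 :=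
  ⟨by linarith [Real.neg_one_le_cos x], by linarith [Real.cos_le_one x]⟩

lemma half_one_add_cos_pow_mem_Icc (x : ℝ) : ((1 + Real.cos x) / 2) ^ n ∈ Icc (0 : ℝ) 1 :=
  ⟨pow_nonneg (half_one_add_cos_mem_Icc x).1 n,
    pow_le_one₀ (half_one_add_cos_mem_Icc x).1 (half_one_add_cos_mem_Icc x).2⟩

lemma binomialSymbol_nonneg : 0 ≤ binomialSymbol u n k :=
  Finset.prod_nonneg fun _ _ => (half_one_add_cos_pow_mem_Icc n _).1

lemma binomialSymbol_le_one : binomialSymbol u n k ≤ 1 :=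
  Finset.prod_le_one (fun _ _ => (half_one_add_cos_pow_mem_Icc n _).1)
    fun _ _ => (half_one_add_cos_pow_mem_Icc n _).2

lemma continuous_binomialSymbol : Continuous (binomialSymbol u n) := by
  unfold binomialSymbol
  fun_prop

variable {u n k}

lemma nat_mul_mul_one_sub_pow_le_one {s : ℝ} (hs0 : 0 ≤ s) (hs1 : s ≤ 1) :
    n * s * (1 - s) ^ n ≤ 1 := by
  have hbernoulli : n * s ≤ (1 + s) ^ n := by
    linarith [one_add_mul_le_pow (show -2 ≤ s by linarith) n]
  have : 0 ≤ (1 - s) ^ n := pow_nonneg (by linarith) n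
  calc n * s * (1 - s) ^ n ≤ (1 + s) ^ n * (1 - s) ^ n := by gcongr
    _ = (1 - s ^ 2) ^ n := by rw [← mul_pow]; ring
    _ ≤ 1 := pow_le_one₀ (by nlinarith) (by nlinarith)

lemma nat_mul_sq_mul_half_one_add_cos_pow_le {x : ℝ} (hx : |x| ≤ Real.pi) :
    n * (x ^ 2 * ((1 + Real.cos x) / 2) ^ n) ≤ Real.pi ^ 2 := by
  have := Real.pi_pos
  have hle : x ^ 2 / Real.pi ^ 2 ≤ 1 := by
    rw [div_le_one (by positivity), ← sq_abs x]
    gcongr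
  have hcos : (1 + Real.cos x) / 2 ≤ 1 - x ^ 2 / Real.pi ^ 2 := by
    have := Real.cos_le_one_sub_mul_cos_sq hx
    linarith [show 2 / Real.pi ^ 2 * x ^ 2 = 2 * (x ^ 2 / Real.pi ^ 2) by ring]
  calc n * (x ^ 2 * ((1 + Real.cos x) / 2) ^ n)
      ≤ n * (x ^ 2 * (1 - x ^ 2 / Real.pi ^ 2) ^ n) := by
        have := (half_one_add_cos_mem_Icc x).1
        gcongr
    _ = Real.pi ^ 2 * (n * (x ^ 2 / Real.pi ^ 2) * (1 - x ^ 2 / Real.pi ^ 2) ^ n) := by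
        field_simp
    _ ≤ Real.pi ^ 2 :=
        mul_le_of_le_one_right (by positivity)
          (nat_mul_mul_one_sub_pow_le_one (by positivity) hle)

lemma nat_mul_inner_sq_mul_binomialSymbol_le (l : ι) (hk : |⟪k, u l⟫| ≤ Real.pi) :
    n * (⟪k, u l⟫ ^ 2 * binomialSymbol u n k) ≤ Real.pi ^ 2 := by
  classical
  refine le_trans ?_ (nat_mul_sq_mul_half_one_add_cos_pow_le (n := n) hk)
  have hfactor : binomialSymbol u n k ≤ ((1 + Real.cos ⟪k, u l⟫) / 2) ^ n := by
    rw [binomialSymbol, ← Finset.mul_prod_erase _ _ (Finset.mem_univ l)]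
    exact mul_le_of_le_one_right (half_one_add_cos_pow_mem_Icc n _).1
      (Finset.prod_le_one (fun _ _ => (half_one_add_cos_pow_mem_Icc n _).1)
        fun _ _ => (half_one_add_cos_pow_mem_Icc n _).2)
  gcongr

lemma three_div_four_pow_card_le_binomialSymbol (hk : ∀ l, n * ⟪k, u l⟫ ^ 2 ≤ 1) :
    (3 / 4) ^ Fintype.card ι ≤ binomialSymbol u n k := by
  rw [binomialSymbol, ← Finset.card_univ, ← Finset.prod_const]
  refine Finset.prod_le_prod (fun _ _ => by norm_num) fun l _ => ?_
  have hcos := (half_one_add_cos_mem_Icc ⟪k, u l⟫).1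
  calc (3 / 4 : ℝ) ≤ 1 + n * ((1 + Real.cos ⟪k, u l⟫) / 2 - 1) := by
        have := mul_le_mul_of_nonneg_left (Real.one_sub_sq_div_two_le_cos (x := ⟪k, u l⟫))
          n.cast_nonneg
        linarith [hk l]
    _ ≤ (1 + ((1 + Real.cos ⟪k, u l⟫) / 2 - 1)) ^ n :=
        one_add_mul_le_pow (by linarith) n
    _ = ((1 + Real.cos ⟪k, u l⟫) / 2) ^ n := by ring

end BinomialKernel

section WeightedEnergy

variable {V : Type*} [NormedAddCommGroup V] [InnerProductSpace ℝ V]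

lemma abs_inner_le_young (x y : V) {θ : ℝ} (hθ : 0 < θ) :
    |⟪x, y⟫| ≤ θ / 2 * ‖x‖ ^ 2 + ‖y‖ ^ 2 / (2 * θ) := by
  have hsq : θ / 2 * ‖x‖ ^ 2 + ‖y‖ ^ 2 / (2 * θ) - ‖x‖ * ‖y‖ =
      (θ * ‖x‖ - ‖y‖) ^ 2 / (2 * θ) := by
    field_simp
    ring
  have hnonneg : 0 ≤ (θ * ‖x‖ - ‖y‖) ^ 2 / (2 * θ) := by positivity
  linarith [abs_real_inner_le_norm x y]

variable {y y' g g' : ℝ → V} {T : ℝ}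

lemma integral_deriv_weighted_inner_eq_zero (hT : 0 ≤ T) (hy0 : y 0 = 0)
    (hy : ∀ s ∈ Icc 0 T, HasDerivAt y (y' s) s) (hg : ∀ s ∈ Icc 0 T, HasDerivAt g (g' s) s)
    (hy' : ContinuousOn y' (Icc 0 T)) (hg' : ContinuousOn g' (Icc 0 T)) :
    ∫ s in (0 : ℝ)..T, (-⟪y s, g s⟫ + (T - s) * (⟪y s, g' s⟫ + ⟪y' s, g s⟫)) = 0 := by
  have hyc : ContinuousOn y (Icc 0 T) := HasDerivAt.continuousOn hy
  have hgc : ContinuousOn g (Icc 0 T) := HasDerivAt.continuousOn hg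
  rw [intervalIntegral.integral_eq_sub_of_hasDerivAt (f := fun s => (T - s) * ⟪y s, g s⟫)]
  · rw [sub_self, zero_mul, hy0, inner_zero_left, mul_zero, sub_zero]
  · intro s hs
    rw [uIcc_of_le hT] at hs
    have hderiv := ((hasDerivAt_id s).const_sub T).mul ((hy s hs).inner ℝ (hg s hs))
    exact hderiv.congr_deriv (by rw [neg_one_mul, id_eq])
  · refine ContinuousOn.intervalIntegrable ?_
    rw [uIcc_of_le hT]
    fun_prop

lemma weighted_inner_le_young {s θ : ℝ} (hs : s ∈ Icc 0 T) (hθ : 0 < θ) (x z z' : V) :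
    ⟪x, z⟫ - (T - s) * ⟪x, z'⟫ ≤ θ * ‖x‖ ^ 2 + (‖z‖ ^ 2 + T ^ 2 * ‖z'‖ ^ 2) / (2 * θ) := by
  have hz := abs_inner_le_young x z hθ
  have hz' := abs_inner_le_young x ((T - s) • z') hθ
  rw [inner_smul_right, norm_smul, mul_pow, Real.norm_eq_abs, sq_abs] at hz'
  have hweight : (T - s) ^ 2 * ‖z'‖ ^ 2 / (2 * θ) ≤ T ^ 2 * ‖z'‖ ^ 2 / (2 * θ) := by
    have := pow_le_pow_left₀ (sub_nonneg.2 hs.2) (sub_le_self T hs.1) 2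
    gcongr
  rw [add_div]
  linarith [le_abs_self ⟪x, z⟫, neg_abs_le ((T - s) * ⟪x, z'⟫)]

lemma setIntegral_weighted_inner_le (hT : 0 ≤ T) (hy0 : y 0 = 0)
    (hy : ∀ s ∈ Icc 0 T, HasDerivAt y (y' s) s) (hg : ∀ s ∈ Icc 0 T, HasDerivAt g (g' s) s)
    (hy' : ContinuousOn y' (Icc 0 T)) (hg' : ContinuousOn g' (Icc 0 T)) {θ : ℝ} (hθ : 0 < θ) :
    ∫ s in Ioc 0 T, (T - s) * ⟪y' s, g s⟫ ≤
      ∫ s in Ioc 0 T, (θ * ‖y s‖ ^ 2 + (‖g s‖ ^ 2 + T ^ 2 * ‖g' s‖ ^ 2) / (2 * θ)) := by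
  have hyc : ContinuousOn y (Icc 0 T) := HasDerivAt.continuousOn hy
  have hgc : ContinuousOn g (Icc 0 T) := HasDerivAt.continuousOn hg
  have hint : ∀ {h : ℝ → ℝ}, ContinuousOn h (Icc 0 T) → IntegrableOn h (Ioc 0 T) := fun hh =>
    hh.integrableOn_Icc.mono_set Ioc_subset_Icc_self
  have hW := integral_deriv_weighted_inner_eq_zero hT hy0 hy hg hy' hg'
  rw [intervalIntegral.integral_of_le hT] at hW
  refine le_of_le_of_eq ?_ ((integral_add (hint (by fun_prop)) (hint (by fun_prop))).trans
    ((congrArg (· + _) hW).trans (zero_add _)))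
  refine setIntegral_mono_on (hint (by fun_prop)) (hint (by fun_prop)) measurableSet_Ioc
    fun s hs => ?_
  have := weighted_inner_le_young (Ioc_subset_Icc_self hs) hθ (y s) (g s) (g' s)
  linarith

end WeightedEnergy

section MaterialDerivative

open scoped AddMonoidAlgebra

variable {E : Type*} [NormedAddCommGroup E] [NormedSpace ℝ E] (w : ℝ[E]) (v : E) (δ : ℝ)

/-- `∇G(0) (v + δ f(0))` for the average `G` of `f` with weights `w`: the rate of change of `G` at
time `0` seen by a particle that starts at the origin of the flow `v + δ f`. -/
noncomputable def materialDeriv (f : E → E) : E :=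
  fderiv ℝ (pointAverage w f) 0 (v + δ • f 0)

namespace SolenoidalField

lemma pointAverage_translate (f : SolenoidalField E) (x : E) :
    pointAverage w (f.translate x).1 0 = pointAverage w f.1 x :=
  (pointAverage_comp_add_left w f.1 x 0).trans (by rw [add_zero])

lemma materialDeriv_translate (f : SolenoidalField E) (x : E) :
    materialDeriv w v δ (f.translate x).1 = fderiv ℝ (pointAverage w f.1) x (v + δ • f.1 x) := by
  have havg : pointAverage w (f.translate x).1 = fun y => pointAverage w f.1 (x + y) :=
    funext fun y => pointAverage_comp_add_left w f.1 x y
  rw [materialDeriv, havg, fderiv_comp_add_left, translate_apply, add_zero]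

variable [MeasurableSpace E] [BorelSpace E] [FiniteDimensional ℝ E]

lemma measurable_pointAverage {β : Type*} [MeasurableSpace β] {f : β → SolenoidalField E}
    {x : β → E} (hf : Measurable f) (hx : Measurable x) :
    Measurable fun b => pointAverage w (f b).1 (x b) := by
  simp only [pointAverage_eq_sum]
  exact Finset.measurable_fun_sum _ fun z _ =>
    (measurable_eval.comp (hf.prodMk (hx.add_const z))).const_smul (w.coeff z)

lemma measurable_materialDeriv :
    Measurable fun f : SolenoidalField E => materialDeriv w v δ f.1 := by
  have hdrift : Measurable fun f : SolenoidalField E => v + δ • f.1 0 :=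
    ((measurable_apply 0).const_smul δ).const_add v
  refine measurable_of_tendsto_metrizable
    (f := fun (n : ℕ) (f : SolenoidalField E) =>
      pointAverage (differenceQuotient (v + δ • f.1 0) n * w) f.1 0) (fun n => ?_)
    (tendsto_pi_nhds.2 fun f => tendsto_pointAverage_differenceQuotient_mul f.contDiff w _ 0)
  simp only [pointAverage_differenceQuotient_mul]
  exact ((measurable_pointAverage w measurable_id (by fun_prop)).sub
    (measurable_pointAverage w measurable_id measurable_const)).const_smul (n : ℝ)

end SolenoidalField

end MaterialDerivative

section StationaryProcess

variable {τ Ω S : Type*} [MeasurableSpace τ] [MeasurableSpace Ω] [MeasurableSpace S]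
  {κ : Measure τ} {P : Measure Ω} [SFinite P] {Z : τ × Ω → S}

lemma measurePreserving_prodMk_of_ae_map_eq {ν : Measure S} [SFinite ν] (hZ : Measurable Z)
    (hlaw : ∀ᵐ s ∂κ, P.map (fun ω => Z (s, ω)) = ν) :
    MeasurePreserving (fun p => (p.1, Z p)) (κ.prod P) (κ.prod ν) := by
  have hmeas : Measurable fun p => (p.1, Z p) := measurable_fst.prodMk hZ
  refine ⟨hmeas, Measure.ext fun A hA => ?_⟩
  rw [Measure.map_apply hmeas hA, Measure.prod_apply (hmeas hA), Measure.prod_apply hA]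
  refine lintegral_congr_ae (hlaw.mono fun s hs => ?_)
  dsimp only
  rw [← hs]
  exact (Measure.map_apply (hZ.comp measurable_prodMk_left) (measurable_prodMk_left hA)).symm

variable {f : Ω → S} {c : τ → ℝ} {φ : S → ℝ}

lemma integrable_mul_comp_of_ae_map_eq (hf : Measurable f) (hZ : Measurable Z)
    (hlaw : ∀ᵐ s ∂κ, P.map (fun ω => Z (s, ω)) = P.map f) (hc : Integrable c κ)
    (hφ : Measurable φ) (hφf : Integrable (fun ω => φ (f ω)) P) :
    Integrable (fun p : τ × Ω => c p.1 * φ (Z p)) (κ.prod P) :=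
  (measurePreserving_prodMk_of_ae_map_eq hZ hlaw).integrable_comp_of_integrable
    (hc.mul_prod ((integrable_map_measure hφ.aestronglyMeasurable hf.aemeasurable).2 hφf))

lemma integral_mul_comp_of_ae_map_eq [SFinite κ] (hf : Measurable f) (hZ : Measurable Z)
    (hlaw : ∀ᵐ s ∂κ, P.map (fun ω => Z (s, ω)) = P.map f) (hc : Measurable c)
    (hφ : Measurable φ) :
    ∫ p, c p.1 * φ (Z p) ∂(κ.prod P) = (∫ s, c s ∂κ) * ∫ ω, φ (f ω) ∂P := by
  have hmp := measurePreserving_prodMk_of_ae_map_eq hZ hlaw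
  have hcφ : Measurable fun q : τ × S => c q.1 * φ q.2 :=
    (hc.comp measurable_fst).mul (hφ.comp measurable_snd)
  rw [← integral_map hf.aemeasurable hφ.aestronglyMeasurable, ← integral_prod_mul,
    ← hmp.map_eq, integral_map hmp.aemeasurable hcφ.aestronglyMeasurable]

variable {T θ : ℝ}

lemma integrable_prod_of_integrableOn_integral {u : ℝ → Ω → ℝ} (hu0 : ∀ s ω, 0 ≤ u s ω)
    (hu : Measurable (Function.uncurry u)) (hint : ∀ s, Integrable (u s) P)
    (hloc : IntegrableOn (fun s => ∫ ω, u s ω ∂P) (Icc 0 T)) :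
    Integrable (Function.uncurry u) ((volume.restrict (Ioc 0 T)).prod P) := by
  rw [integrable_prod_iff hu.aestronglyMeasurable]
  refine ⟨ae_of_all _ hint, (hloc.mono_set Ioc_subset_Icc_self).congr (ae_of_all _ fun s => ?_)⟩
  simp only [Function.uncurry_apply_pair, Real.norm_of_nonneg (hu0 s _)]

lemma setIntegral_Ioc_sub_id (hT : 0 ≤ T) : ∫ s in Ioc 0 T, (T - s) = T ^ 2 / 2 := by
  rw [← intervalIntegral.integral_of_le hT,
    intervalIntegral.integral_comp_sub_left (fun s => s), integral_id]
  ring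

lemma integral_weighted_le_of_ae_pathwise_le {Z : ℝ × Ω → S} {ψ : S → ℝ}
    {u : ℝ → Ω → ℝ} (hT : 0 ≤ T) (hf : Measurable f) (hZ : Measurable Z)
    (hlaw : ∀ᵐ s ∂volume.restrict (Ioc 0 T), P.map (fun ω => Z (s, ω)) = P.map f)
    (hφ : Measurable φ) (hφf : Integrable (fun ω => φ (f ω)) P)
    (hψ : Measurable ψ) (hψf : Integrable (fun ω => ψ (f ω)) P)
    (hu : Integrable (Function.uncurry u) ((volume.restrict (Ioc 0 T)).prod P))
    (hpath : ∀ᵐ ω ∂P, ∫ s in Ioc 0 T, (T - s) * φ (Z (s, ω)) ≤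
      ∫ s in Ioc 0 T, (θ * u s ω + ψ (Z (s, ω)))) :
    T ^ 2 / 2 * ∫ ω, φ (f ω) ∂P ≤
      θ * (∫ s in (0 : ℝ)..T, ∫ ω, u s ω ∂P) + T * ∫ ω, ψ (f ω) ∂P := by
  have hlhs := integrable_mul_comp_of_ae_map_eq hf hZ hlaw (c := fun s => T - s)
    (by fun_prop : Continuous fun s => T - s).integrableOn_Ioc hφ hφf
  have hψZ := integrable_mul_comp_of_ae_map_eq hf hZ hlaw (c := fun _ => 1)
    (integrable_const 1) hψ hψf
  have hψ_eq := integral_mul_comp_of_ae_map_eq hf hZ hlaw (c := fun _ => 1) measurable_const hψ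
  simp only [one_mul, setIntegral_const, smul_eq_mul, mul_one, Real.volume_real_Ioc_of_le hT,
    sub_zero] at hψZ hψ_eq
  have hrhs : Integrable (fun p => θ * Function.uncurry u p + ψ (Z p))
      ((volume.restrict (Ioc 0 T)).prod P) := (hu.const_mul θ).add hψZ
  calc T ^ 2 / 2 * ∫ ω, φ (f ω) ∂P
      = ∫ p, (T - p.1) * φ (Z p) ∂((volume.restrict (Ioc 0 T)).prod P) := by
        rw [integral_mul_comp_of_ae_map_eq hf hZ hlaw (by fun_prop : Measurable fun s => T - s) hφ,
          setIntegral_Ioc_sub_id hT]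
    _ ≤ ∫ p, (θ * Function.uncurry u p + ψ (Z p)) ∂((volume.restrict (Ioc 0 T)).prod P) := by
        rw [integral_prod_symm _ hlhs, integral_prod_symm _ hrhs]
        exact integral_mono_ae hlhs.integral_prod_right hrhs.integral_prod_right hpath
    _ = θ * (∫ s in (0 : ℝ)..T, ∫ ω, u s ω ∂P) + T * ∫ ω, ψ (f ω) ∂P := by
        rw [integral_add (hu.const_mul θ) hψZ, integral_const_mul, integral_prod _ hu, hψ_eq,
          intervalIntegral.integral_of_le hT]
        rfl

end StationaryProcess

section Trajectories

variable {Ω E : Type*} [MeasurableSpace Ω] [NormedAddCommGroup E] [NormedSpace ℝ E]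
  [MeasurableSpace E]

/-- `X ω` is the trajectory from the origin in the random flow `v + δ F ω`, and its displacement
`X ω s - s v` relative to the mean drift has a finite, locally integrable second moment. -/
structure IsSquareIntegrableTrajectory (P : Measure Ω) (F : Ω → E → E) (v : E) (δ : ℝ)
    (X : Ω → ℝ → E) : Prop where
  measurable : Measurable (Function.uncurry X)
  ae_hasDerivAt : ∀ᵐ ω ∂P, X ω 0 = 0 ∧ ∀ s, 0 ≤ s → HasDerivAt (X ω) (v + δ • F ω (X ω s)) s
  integrable : ∀ s, Integrable (fun ω => ‖X ω s - s • v‖ ^ 2) P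
  integrableOn : ∀ T, IntegrableOn (fun s => ∫ ω, ‖X ω s - s • v‖ ^ 2 ∂P) (Icc 0 T)

lemma IsSquareIntegrableTrajectory.congr_ae {P : Measure Ω} {F G : Ω → E → E} {v : E} {δ : ℝ}
    {X : Ω → ℝ → E} (hX : IsSquareIntegrableTrajectory P F v δ X) (hFG : F =ᵐ[P] G) :
    IsSquareIntegrableTrajectory P G v δ X where
  measurable := hX.measurable
  ae_hasDerivAt := by
    filter_upwards [hX.ae_hasDerivAt, hFG] with ω hω hFGω
    rwa [← hFGω]
  integrable := hX.integrable
  integrableOn := hX.integrableOn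

end Trajectories

section EnergyInequality

open scoped AddMonoidAlgebra

variable {E : Type*} [NormedAddCommGroup E] [InnerProductSpace ℝ E] {v : E} {δ T θ : ℝ}

lemma setIntegral_weighted_inner_trajectory_le (f : SolenoidalField E) {X : ℝ → E} (w : ℝ[E])
    (hX0 : X 0 = 0) (hX : ∀ s, 0 ≤ s → HasDerivAt X (v + δ • f.1 (X s)) s) (hT : 0 ≤ T)
    (hθ : 0 < θ) :
    ∫ s in Ioc 0 T, (T - s) * (δ * ⟪(f.translate (X s)).1 0,
        pointAverage w (f.translate (X s)).1 0⟫) ≤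
      ∫ s in Ioc 0 T, (θ * ‖X s - s • v‖ ^ 2 + (‖pointAverage w (f.translate (X s)).1 0‖ ^ 2 +
        T ^ 2 * ‖materialDeriv w v δ (f.translate (X s)).1‖ ^ 2) / (2 * θ)) := by
  have hG := contDiff_pointAverage f.contDiff w
  have hXc : ContinuousOn X (Icc 0 T) := HasDerivAt.continuousOn fun s hs => hX s hs.1
  have hfX : ContinuousOn (fun s => f.1 (X s)) (Icc 0 T) := f.continuous.comp_continuousOn hXc
  have hy : ∀ s ∈ Icc 0 T, HasDerivAt (fun s => X s - s • v) (δ • f.1 (X s)) s := fun s hs =>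
    ((hX s hs.1).sub ((hasDerivAt_id s).smul_const v)).congr_deriv
      (by rw [one_smul, add_sub_cancel_left])
  have hg : ∀ s ∈ Icc 0 T, HasDerivAt (fun s => pointAverage w f.1 (X s))
      (fderiv ℝ (pointAverage w f.1) (X s) (v + δ • f.1 (X s))) s := fun s hs =>
    (hG.differentiable one_ne_zero (X s)).hasFDerivAt.comp_hasDerivAt s (hX s hs.1)
  have henergy := setIntegral_weighted_inner_le hT (by rw [hX0, zero_smul, sub_zero]) hy hg
    (hfX.const_smul δ) (((hG.continuous_fderiv one_ne_zero).comp_continuousOn hXc).clm_apply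
      (continuousOn_const.add (hfX.const_smul δ))) hθ
  simpa only [SolenoidalField.pointAverage_translate, SolenoidalField.materialDeriv_translate,
    SolenoidalField.translate_apply, add_zero, real_inner_smul_left] using henergy

variable [FiniteDimensional ℝ E] [MeasurableSpace E] [BorelSpace E] {Ω : Type*} [MeasurableSpace Ω]
  {P : Measure Ω} [IsProbabilityMeasure P] {f : Ω → SolenoidalField E} {X : Ω → ℝ → E}

theorem sq_div_two_mul_integral_inner_pointAverage_le (hf : Measurable f)
    (hstat : SolenoidalField.IsStationary (P.map f))
    (hδ : δ ≠ 0) (hX : IsSquareIntegrableTrajectory P (fun ω => (f ω).1) v δ X) (w : ℝ[E])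
    (hinner : Integrable (fun ω => ⟪(f ω).1 0, pointAverage w (f ω).1 0⟫) P)
    (hG : Integrable (fun ω => ‖pointAverage w (f ω).1 0‖ ^ 2) P)
    (hD : Integrable (fun ω => ‖materialDeriv w v δ (f ω).1‖ ^ 2) P) (hT : 0 ≤ T) (hθ : 0 < θ) :
    T ^ 2 / 2 * (δ * ∫ ω, ⟪(f ω).1 0, pointAverage w (f ω).1 0⟫ ∂P) ≤
      θ * (∫ s in (0 : ℝ)..T, ∫ ω, ‖X ω s - s • v‖ ^ 2 ∂P) +
        T * ((∫ ω, ‖pointAverage w (f ω).1 0‖ ^ 2 ∂P +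
          T ^ 2 * ∫ ω, ‖materialDeriv w v δ (f ω).1‖ ^ 2 ∂P) / (2 * θ)) := by
  have hXs : Measurable fun p : ℝ × Ω => X p.2 p.1 := hX.measurable.comp measurable_swap
  have hGm : Measurable fun g : SolenoidalField E => pointAverage w g.1 0 :=
    SolenoidalField.measurable_pointAverage w measurable_id measurable_const
  have hDm := SolenoidalField.measurable_materialDeriv w v δ
  have hmain := integral_weighted_le_of_ae_pathwise_le hT hf
    (Z := fun p => (f p.2).translate (X p.2 p.1))
    (φ := fun g => δ * ⟪g.1 0, pointAverage w g.1 0⟫)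
    (ψ := fun g => (‖pointAverage w g.1 0‖ ^ 2 + T ^ 2 * ‖materialDeriv w v δ g.1‖ ^ 2) / (2 * θ))
    (SolenoidalField.measurable_translate.comp (hXs.prodMk (hf.comp measurable_snd)))
    ((ae_restrict_mem measurableSet_Ioc).mono fun s hs =>
      map_translate_trajectory_addSMul hf hstat v hδ hs.1.le (hXs.comp measurable_prodMk_left)
        (hX.ae_hasDerivAt.mono fun ω hω => ⟨hω.1, fun r hr => hω.2 r hr.1⟩))
    (((SolenoidalField.measurable_apply 0).inner hGm).const_mul δ) (hinner.const_mul δ)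
    (((hGm.norm.pow_const 2).add ((hDm.norm.pow_const 2).const_mul _)).div_const _)
    ((hG.add (hD.const_mul _)).div_const _)
    (integrable_prod_of_integrableOn_integral (fun s ω => sq_nonneg ‖X ω s - s • v‖)
      ((hXs.sub (measurable_fst.smul_const v)).norm.pow_const 2)
      hX.integrable (hX.integrableOn T))
    (hX.ae_hasDerivAt.mono fun ω hω =>
      setIntegral_weighted_inner_trajectory_le (f ω) w hω.1 hω.2 hT hθ)
  rwa [integral_const_mul, integral_div, integral_add hG (hD.const_mul _),
    integral_const_mul] at hmain

end EnergyInequality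

section SpectralDensity

open scoped AddMonoidAlgebra

lemma eLpNorm_id_gaussianReal (V : ℝ) (p : ℝ≥0∞) :
    eLpNorm id p (gaussianReal 0 V.toNNReal) =
      ENNReal.ofReal √V * eLpNorm id p (gaussianReal 0 1) := by
  have hmap : gaussianReal 0 V.toNNReal = (gaussianReal 0 1).map (√V * ·) := by
    rw [gaussianReal_map_const_mul, mul_zero, mul_one]
    congr 1
    ext
    rw [NNReal.coe_mk, Real.coe_toNNReal', Real.sq_sqrt']
  rw [hmap, eLpNorm_map_measure aestronglyMeasurable_id (by fun_prop), Function.id_comp]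
  refine (eLpNorm_const_smul (√V) (id : ℝ → ℝ) p _).trans ?_
  rw [← ofReal_norm, Real.norm_of_nonneg (Real.sqrt_nonneg V)]

variable {Ω E : Type*} [MeasurableSpace Ω] [NormedAddCommGroup E] [InnerProductSpace ℝ E]
  [MeasureSpace E]

lemma integrable_mul_norm_symbol_sq [OpensMeasurableSpace E] {g : E → ℝ} (hg : Integrable g)
    (w : ℝ[E]) : Integrable fun k => g k * ‖symbol k w‖ ^ 2 := by
  obtain ⟨C, hC⟩ := exists_norm_symbol_le w
  refine hg.mul_bdd (c := C ^ 2) ((continuous_symbol w).norm.pow 2).aestronglyMeasurable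
    (ae_of_all _ fun k => ?_)
  rw [norm_pow, norm_norm]
  exact pow_le_pow_left₀ (norm_nonneg _) (hC k) 2

/-- The real random field `ξ` is centred, Gaussian and homogeneous with spectral density `ρ`. As
averages at the origin include all finite linear combinations of values of `ξ`, their laws
determine the finite-dimensional distributions. -/
structure HasSpectralDensity (μ : Measure Ω) (ξ : Ω → E → ℝ) (ρ : E → ℝ) : Prop where
  nonneg : ∀ k, 0 ≤ ρ k
  integrable : Integrable ρ
  map_pointAverage : ∀ w : ℝ[E], μ.map (fun ω => pointAverage w (ξ ω) 0) =
    gaussianReal 0 (∫ k, ρ k * ‖symbol k w‖ ^ 2).toNNReal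

namespace HasSpectralDensity

variable {μ : Measure Ω} {ξ : Ω → E → ℝ} {ρ : E → ℝ}

lemma aemeasurable_pointAverage (h : HasSpectralDensity μ ξ ρ) (w : ℝ[E]) :
    AEMeasurable (fun ω => pointAverage w (ξ ω) 0) μ := by
  by_contra hw
  have := h.map_pointAverage w
  rw [Measure.map_of_not_aemeasurable hw] at this
  exact IsProbabilityMeasure.ne_zero _ this.symm

lemma eLpNorm_pointAverage (h : HasSpectralDensity μ ξ ρ) (w : ℝ[E]) (p : ℝ≥0∞) :
    eLpNorm (fun ω => pointAverage w (ξ ω) 0) p μ =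
      ENNReal.ofReal √(∫ k, ρ k * ‖symbol k w‖ ^ 2) * eLpNorm id p (gaussianReal 0 1) := by
  rw [← eLpNorm_id_gaussianReal, ← h.map_pointAverage w,
    eLpNorm_map_measure aestronglyMeasurable_id (h.aemeasurable_pointAverage w), Function.id_comp]

lemma memLp_pointAverage (h : HasSpectralDensity μ ξ ρ) (w : ℝ[E]) {p : ℝ≥0∞}
    (hp : p ≠ ∞) :
    MemLp (fun ω => pointAverage w (ξ ω) 0) p μ := by
  refine ⟨(h.aemeasurable_pointAverage w).aestronglyMeasurable, ?_⟩
  rw [h.eLpNorm_pointAverage]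
  exact ENNReal.mul_lt_top ENNReal.ofReal_lt_top (memLp_id_gaussianReal' p hp).2

lemma integral_pointAverage_sq (h : HasSpectralDensity μ ξ ρ) (w : ℝ[E]) :
    ∫ ω, pointAverage w (ξ ω) 0 ^ 2 ∂μ = ∫ k, ρ k * ‖symbol k w‖ ^ 2 := by
  have hvar := variance_fun_id_gaussianReal (μ := 0) (v := (∫ k, ρ k * ‖symbol k w‖ ^ 2).toNNReal)
  rw [variance_eq_integral aemeasurable_id', integral_id_gaussianReal, ← h.map_pointAverage w,
    integral_map (h.aemeasurable_pointAverage w) (by fun_prop)] at hvar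
  simpa only [sub_zero, Real.coe_toNNReal _
    (integral_nonneg fun k => mul_nonneg (h.nonneg k) (sq_nonneg ‖symbol k w‖))] using hvar

lemma integral_pointAverage_mul [OpensMeasurableSpace E] (h : HasSpectralDensity μ ξ ρ)
    (w w' : ℝ[E]) :
    ∫ ω, pointAverage w (ξ ω) 0 * pointAverage w' (ξ ω) 0 ∂μ =
      ∫ k, ρ k * ⟪symbol k w, symbol k w'⟫ := by
  have hξ : ∀ ω, pointAverage w (ξ ω) 0 * pointAverage w' (ξ ω) 0 =
      (pointAverage (w + w') (ξ ω) 0 ^ 2 - pointAverage w (ξ ω) 0 ^ 2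
        - pointAverage w' (ξ ω) 0 ^ 2) / 2 := fun ω => by
    rw [pointAverage_add_weight]
    ring
  have hρ : ∀ k, ρ k * ⟪symbol k w, symbol k w'⟫ = (ρ k * ‖symbol k (w + w')‖ ^ 2
      - ρ k * ‖symbol k w‖ ^ 2 - ρ k * ‖symbol k w'‖ ^ 2) / 2 := fun k => by
    rw [map_add, norm_add_sq_real]
    ring
  have hξint : ∀ w, Integrable (fun ω => pointAverage w (ξ ω) 0 ^ 2) μ := fun w =>
    (h.memLp_pointAverage w ENNReal.ofNat_ne_top).integrable_sq
  have hρint := integrable_mul_norm_symbol_sq h.integrable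
  simp only [hξ, hρ, integral_div]
  rw [integral_sub (by exact (hξint _).sub (hξint _)) (hξint _), integral_sub (hξint _) (hξint _),
    integral_sub (by exact (hρint _).sub (hρint _)) (hρint _), integral_sub (hρint _) (hρint _)]
  simp only [h.integral_pointAverage_sq]

lemma eLpNorm_fderiv_pointAverage_le [OpensMeasurableSpace E] (h : HasSpectralDensity μ ξ ρ)
    (hξ : ∀ ω, ContDiff ℝ 1 (ξ ω)) (w : ℝ[E]) {u : E}
    (hu : Integrable fun k => ρ k * ⟪k, u⟫ ^ 2) (p : ℝ≥0∞) :
    eLpNorm (fun ω => fderiv ℝ (pointAverage w (ξ ω)) 0 u) p μ ≤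
      ENNReal.ofReal √(∫ k, ρ k * ⟪k, u⟫ ^ 2 * ‖symbol k w‖ ^ 2) *
        eLpNorm id p (gaussianReal 0 1) := by
  refine (Lp.eLpNorm_lim_le_liminf_eLpNorm
    (fun n => (h.aemeasurable_pointAverage _).aestronglyMeasurable) _
    (ae_of_all _ fun ω => tendsto_pointAverage_differenceQuotient_mul (hξ ω) w u 0)).trans ?_
  refine liminf_le_of_frequently_le' (Frequently.of_forall fun n => ?_)
  rw [h.eLpNorm_pointAverage]
  gcongr 4
  · exact integrable_mul_norm_symbol_sq h.integrable _
  · exact integrable_mul_norm_symbol_sq hu w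
  · intro k
    dsimp only
    rw [map_mul, norm_mul, mul_pow, ← mul_assoc, ← sq_abs ⟪k, u⟫]
    have := h.nonneg k
    have := norm_symbol_differenceQuotient_le k u n
    gcongr

end HasSpectralDensity

end SpectralDensity

section EuclideanLp

variable {Ω ι : Type*} [MeasurableSpace Ω] {μ : Measure Ω} [Fintype ι]

lemma integrable_inner_of_memLp_two {V : Type*} [NormedAddCommGroup V] [InnerProductSpace ℝ V]
    {f g : Ω → V} (hf : MemLp f 2 μ) (hg : MemLp g 2 μ) : Integrable (fun ω => ⟪f ω, g ω⟫) μ :=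
  (hf.norm.integrable_mul hg.norm).mono' (hf.1.inner hg.1)
    (ae_of_all _ fun _ => norm_inner_le_norm _ _)

lemma integral_norm_sq_le_of_eLpNorm_le {V : Type*} [NormedAddCommGroup V] {g : Ω → V} {A : ℝ}
    (hA : 0 ≤ A) (hg : AEStronglyMeasurable g μ) (h : eLpNorm g 2 μ ≤ ENNReal.ofReal A) :
    ∫ ω, ‖g ω‖ ^ 2 ∂μ ≤ A ^ 2 := by
  have hmem : MemLp g 2 μ := ⟨hg, h.trans_lt ENNReal.ofReal_lt_top⟩
  rw [hmem.eLpNorm_eq_integral_rpow_norm two_ne_zero ENNReal.ofNat_ne_top,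
    ENNReal.ofReal_le_ofReal_iff hA] at h
  simp only [ENNReal.toReal_ofNat, Real.rpow_ofNat, ← one_div, ← Real.sqrt_eq_rpow] at h
  exact (Real.sqrt_le_left hA).mp h

lemma eLpNorm_clm_apply_le {V : Type*} [NormedAddCommGroup V] [NormedSpace ℝ V]
    {L : Ω → EuclideanSpace ℝ ι →L[ℝ] V} {b : Ω → EuclideanSpace ℝ ι}
    (hL : ∀ u, AEStronglyMeasurable (fun ω => L ω u) μ) (hb : AEStronglyMeasurable b μ)
    (p q : ℝ≥0∞) {r : ℝ≥0∞} (hr : 1 ≤ r) [p.HolderTriple q r] :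
    eLpNorm (fun ω => L ω (b ω)) r μ ≤ ∑ l, eLpNorm (fun ω => b ω l) p μ *
      eLpNorm (fun ω => L ω (EuclideanSpace.basisFun ι ℝ l)) q μ := by
  have hsum : (fun ω => L ω (b ω)) =
      ∑ l, (fun ω => b ω l) • fun ω => L ω (EuclideanSpace.basisFun ι ℝ l) := by
    funext ω
    rw [Finset.sum_apply]
    conv_lhs => rw [← (EuclideanSpace.basisFun ι ℝ).sum_repr (b ω), map_sum]
    simp only [map_smul, EuclideanSpace.basisFun_repr, Pi.smul_apply']
  have hbl : ∀ l, AEStronglyMeasurable (fun ω => b ω l) μ := fun l =>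
    (EuclideanSpace.proj (𝕜 := ℝ) l).continuous.comp_aestronglyMeasurable hb
  rw [hsum]
  refine (eLpNorm_sum_le (fun l _ => (hbl l).smul (hL _)) hr).trans ?_
  exact Finset.sum_le_sum fun l _ => eLpNorm_smul_le_mul_eLpNorm (hL _) (hbl l)

lemma eLpNorm_const_add_mul_le [IsProbabilityMeasure μ] {ξ : Ω → ℝ}
    (hξ : AEStronglyMeasurable ξ μ) (c : ℝ) {δ : ℝ} (hδ : |δ| ≤ 1) {p : ℝ≥0∞} (hp : 1 ≤ p) :
    eLpNorm (fun ω => c + δ * ξ ω) p μ ≤ ‖c‖ₑ + eLpNorm ξ p μ := by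
  have hδ' : ‖δ‖ₑ ≤ 1 := by
    rw [← ofReal_norm, Real.norm_eq_abs]
    exact ENNReal.ofReal_le_one.2 hδ
  refine (eLpNorm_add_le aestronglyMeasurable_const (hξ.const_mul δ) hp).trans ?_
  rw [eLpNorm_const _ (by positivity) (IsProbabilityMeasure.ne_zero μ), measure_univ,
    ENNReal.one_rpow, mul_one]
  gcongr
  refine (eLpNorm_const_smul δ ξ p μ).trans_le ?_
  exact mul_le_of_le_one_left zero_le hδ'

lemma eLpNorm_le_sum_coord {p : ℝ≥0∞} (hp : 1 ≤ p) {g : Ω → EuclideanSpace ℝ ι}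
    (hg : AEStronglyMeasurable g μ) : eLpNorm g p μ ≤ ∑ i, eLpNorm (fun ω => g ω i) p μ := by
  have hgi : ∀ i, AEStronglyMeasurable (fun ω => g ω i) μ := fun i =>
    (EuclideanSpace.proj (𝕜 := ℝ) i).continuous.comp_aestronglyMeasurable hg
  have hsum : g = ∑ i, fun ω => g ω i • EuclideanSpace.basisFun ι ℝ i := by
    funext ω
    rw [Finset.sum_apply]
    conv_lhs => rw [← (EuclideanSpace.basisFun ι ℝ).sum_repr (g ω)]
    simp only [EuclideanSpace.basisFun_repr]
  calc eLpNorm g p μ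
      ≤ ∑ i, eLpNorm (fun ω => g ω i • EuclideanSpace.basisFun ι ℝ i) p μ := by
        conv_lhs => rw [hsum]
        exact eLpNorm_sum_le (fun i _ => (hgi i).smul aestronglyMeasurable_const) hp
    _ = ∑ i, eLpNorm (fun ω => g ω i) p μ :=
        Finset.sum_congr rfl fun i _ => eLpNorm_congr_norm_ae <| ae_of_all _ fun ω => by
          rw [norm_smul, (EuclideanSpace.basisFun ι ℝ).orthonormal.1 i, mul_one]

end EuclideanLp
section VectorFieldMoments

open scoped AddMonoidAlgebra

variable {Ω E κ : Type*} [MeasurableSpace Ω] [NormedAddCommGroup E] [InnerProductSpace ℝ E]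
  [MeasureSpace E] [Fintype κ] {μ : Measure Ω} {f : Ω → E → EuclideanSpace ℝ κ} {ρ : κ → E → ℝ}

lemma pointAverage_coord {E κ : Type*} [AddCommGroup E] (w : ℝ[E]) (f : E → EuclideanSpace ℝ κ)
    (x : E) (i : κ) : pointAverage w f x i = pointAverage w (fun y => f y i) x :=
  map_pointAverage (EuclideanSpace.projₗ i) w f x

lemma memLp_pointAverage (h : ∀ i, HasSpectralDensity μ (fun ω x => f ω x i) (ρ i)) (w : ℝ[E])
    {p : ℝ≥0∞} (hp : p ≠ ∞) : MemLp (fun ω => pointAverage w (f ω) 0) p μ :=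
  MemLp.of_eval_piLp fun i => by
    simpa only [pointAverage_coord] using (h i).memLp_pointAverage w hp

lemma integral_inner_pointAverage [OpensMeasurableSpace E]
    (h : ∀ i, HasSpectralDensity μ (fun ω x => f ω x i) (ρ i)) (w w' : ℝ[E]) :
    ∫ ω, ⟪pointAverage w (f ω) 0, pointAverage w' (f ω) 0⟫ ∂μ =
      ∑ i, ∫ k, ρ i k * ⟪symbol k w, symbol k w'⟫ := by
  simp only [PiLp.inner_apply, pointAverage_coord]
  rw [integral_finsetSum _ fun i _ => integrable_inner_of_memLp_two
    ((h i).memLp_pointAverage w ENNReal.ofNat_ne_top)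
    ((h i).memLp_pointAverage w' ENNReal.ofNat_ne_top)]
  refine Finset.sum_congr rfl fun i _ => ?_
  rw [← (h i).integral_pointAverage_mul]
  simp only [RCLike.inner_apply, conj_trivial, mul_comm]

lemma fderiv_pointAverage_coord {E κ : Type*} [NormedAddCommGroup E] [InnerProductSpace ℝ E]
    [Fintype κ] {f : E → EuclideanSpace ℝ κ} (hf : ContDiff ℝ 1 f) (w : ℝ[E]) (u : E) (i : κ) :
    fderiv ℝ (pointAverage w f) 0 u i = fderiv ℝ (pointAverage w fun x => f x i) 0 u := by
  have hd := ((contDiff_pointAverage hf w).differentiable one_ne_zero 0).hasFDerivAt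
  have hcoord := (EuclideanSpace.proj (𝕜 := ℝ) i).hasFDerivAt.comp 0 hd
  have heq : (fun x => pointAverage w f x i) = pointAverage w fun x => f x i :=
    funext fun x => pointAverage_coord w f x i
  rw [← heq]
  exact (DFunLike.congr_fun hcoord.fderiv u).symm

lemma aestronglyMeasurable_fderiv_pointAverage
    (h : ∀ i, HasSpectralDensity μ (fun ω x => f ω x i) (ρ i)) (hf : ∀ ω, ContDiff ℝ 1 (f ω))
    (w : ℝ[E]) (u : E) :
    AEStronglyMeasurable (fun ω => fderiv ℝ (pointAverage w (f ω)) 0 u) μ :=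
  aestronglyMeasurable_of_tendsto_ae atTop
    (fun n : ℕ => (memLp_pointAverage h (differenceQuotient u n * w) ENNReal.one_ne_top).1)
    (ae_of_all _ fun ω => tendsto_pointAverage_differenceQuotient_mul (hf ω) w u 0)

end VectorFieldMoments

section MaterialDerivativeMoments

variable {ι : Type*} [Fintype ι] {K : ℝ} {n : ℕ}

/-- The standard basis in units of `K⁻¹`, chosen so that `|⟪k, scaledBasis K l⟫| ≤ 1` on the
spectral ball `‖k‖ ≤ K`. -/
noncomputable def scaledBasis (K : ℝ) (l : ι) : EuclideanSpace ℝ ι :=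
  K⁻¹ • EuclideanSpace.basisFun ι ℝ l

lemma inner_scaledBasis (K : ℝ) (k : EuclideanSpace ℝ ι) (l : ι) :
    ⟪k, scaledBasis K l⟫ = K⁻¹ * k l := by
  rw [scaledBasis, inner_smul_right, real_inner_comm, EuclideanSpace.basisFun_inner]

lemma nat_mul_coord_sq_mul_binomialSymbol_le (hK : 0 < K) {k : EuclideanSpace ℝ ι}
    (hk : ‖k‖ ≤ K) (l : ι) :
    n * (k l ^ 2 * binomialSymbol (scaledBasis K) n k) ≤ (K * Real.pi) ^ 2 := by
  have habs : |⟪k, scaledBasis K l⟫| ≤ Real.pi := by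
    rw [inner_scaledBasis, abs_mul, abs_of_pos (inv_pos.2 hK)]
    calc K⁻¹ * |k l| ≤ K⁻¹ * K := by
          gcongr
          exact (PiLp.norm_apply_le k l).trans hk
      _ ≤ Real.pi := by
          rw [inv_mul_cancel₀ hK.ne']
          linarith [Real.two_le_pi]
  have hscaled := nat_mul_inner_sq_mul_binomialSymbol_le (n := n) l habs
  calc n * (k l ^ 2 * binomialSymbol (scaledBasis K) n k)
      = K ^ 2 * (n * (⟪k, scaledBasis K l⟫ ^ 2 * binomialSymbol (scaledBasis K) n k)) := by
        rw [inner_scaledBasis]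
        field_simp
    _ ≤ (K * Real.pi) ^ 2 := by
        rw [mul_pow]
        gcongr

lemma integrable_mul_binomialSymbol {g : EuclideanSpace ℝ ι → ℝ} (hg : Integrable g)
    (u : ι → EuclideanSpace ℝ ι) (n : ℕ) : Integrable fun k => g k * binomialSymbol u n k :=
  hg.mul_bdd (c := 1) (continuous_binomialSymbol u n).aestronglyMeasurable
    (ae_of_all _ fun k => by
      rw [Real.norm_of_nonneg (binomialSymbol_nonneg u n k)]
      exact binomialSymbol_le_one u n k)

lemma integrable_mul_coord_sq {g : EuclideanSpace ℝ ι → ℝ} (hg : Integrable g)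
    (hsupp : ∀ k, K < ‖k‖ → g k = 0) (l : ι) : Integrable fun k => g k * k l ^ 2 := by
  refine (hg.norm.const_mul (K ^ 2)).mono' (hg.1.mul (by fun_prop)) (ae_of_all _ fun k => ?_)
  rcases lt_or_ge K ‖k‖ with hk | hk
  · rw [hsupp k hk, zero_mul, norm_zero, mul_zero]
  · rw [norm_mul, norm_pow, mul_comm]
    gcongr
    exact (PiLp.norm_apply_le k l).trans hk

lemma integral_mul_coord_sq_mul_norm_symbol_sq_le (hK : 0 < K) (hn : 0 < n)
    {g : EuclideanSpace ℝ ι → ℝ} (hg0 : ∀ k, 0 ≤ g k) (hg : Integrable g)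
    (hsupp : ∀ k, K < ‖k‖ → g k = 0) (l : ι) :
    ∫ k, g k * k l ^ 2 * ‖symbol k (binomialKernel (scaledBasis K) n)‖ ^ 2 ≤
      (K * Real.pi) ^ 2 * ((∫ k, g k * binomialSymbol (scaledBasis K) n k) / n) := by
  rw [← integral_div, ← integral_const_mul]
  refine integral_mono_of_nonneg (ae_of_all _ fun k => ?_)
    (((integrable_mul_binomialSymbol hg _ n).div_const _).const_mul _) (ae_of_all _ fun k => ?_)
  · have := hg0 k
    positivity
  dsimp only
  rcases lt_or_ge K ‖k‖ with hk | hk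
  · simp only [hsupp k hk, zero_mul, zero_div, mul_zero, le_refl]
  have hm := binomialSymbol_nonneg (scaledBasis K) n k
  rw [symbol_binomialKernel, Complex.norm_real, Real.norm_of_nonneg hm, mul_div_assoc',
    le_div_iff₀ (Nat.cast_pos.2 hn)]
  calc g k * k l ^ 2 * binomialSymbol (scaledBasis K) n k ^ 2 * n
      = n * (k l ^ 2 * binomialSymbol (scaledBasis K) n k) *
          (g k * binomialSymbol (scaledBasis K) n k) := by ring
    _ ≤ (K * Real.pi) ^ 2 * (g k * binomialSymbol (scaledBasis K) n k) :=
        mul_le_mul_of_nonneg_right (nat_mul_coord_sq_mul_binomialSymbol_le hK hk l)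
          (mul_nonneg (hg0 k) hm)

variable {Ω : Type*} [MeasurableSpace Ω] {μ : Measure Ω}
  {f : Ω → EuclideanSpace ℝ ι → EuclideanSpace ℝ ι} {ρ : ι → EuclideanSpace ℝ ι → ℝ}

/-- The variance of the part of the field that passes the filter `binomialKernel (scaledBasis K) n`,
as the correlation of the field with its filtered version. -/
noncomputable def filteredVariance (ρ : ι → EuclideanSpace ℝ ι → ℝ) (K : ℝ) (n : ℕ) : ℝ :=
  ∑ i, ∫ k, ρ i k * binomialSymbol (scaledBasis K) n k

lemma integral_mul_binomialSymbol_nonneg {g : EuclideanSpace ℝ ι → ℝ} (hg0 : ∀ k, 0 ≤ g k)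
    (u : ι → EuclideanSpace ℝ ι) (n : ℕ) : 0 ≤ ∫ k, g k * binomialSymbol u n k :=
  integral_nonneg fun k => mul_nonneg (hg0 k) (binomialSymbol_nonneg u n k)

lemma eLpNorm_fderiv_pointAverage_basisFun_le (hK : 0 < K) (hf : ∀ ω, ContDiff ℝ 1 (f ω))
    (h : ∀ i, HasSpectralDensity μ (fun ω x => f ω x i) (ρ i))
    (hsupp : ∀ i k, K < ‖k‖ → ρ i k = 0) (hn : 0 < n) {p : ℝ≥0∞} (hp : 1 ≤ p) (l : ι) :
    eLpNorm (fun ω => fderiv ℝ (pointAverage (binomialKernel (scaledBasis K) n) (f ω)) 0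
      (EuclideanSpace.basisFun ι ℝ l)) p μ ≤ ENNReal.ofReal √(filteredVariance ρ K n / n) *
        (Fintype.card ι * (ENNReal.ofReal (K * Real.pi) * eLpNorm id p (gaussianReal 0 1))) := by
  set w := binomialKernel (scaledBasis (ι := ι) K) n
  have hinner : ∀ k : EuclideanSpace ℝ ι, ⟪k, EuclideanSpace.basisFun ι ℝ l⟫ = k l := fun k => by
    rw [real_inner_comm, EuclideanSpace.basisFun_inner]
  have hcoord : ∀ i, ∫ k, ρ i k * ⟪k, EuclideanSpace.basisFun ι ℝ l⟫ ^ 2 * ‖symbol k w‖ ^ 2 ≤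
      (K * Real.pi) ^ 2 * (filteredVariance ρ K n / n) := fun i => by
    simp only [hinner]
    refine (integral_mul_coord_sq_mul_norm_symbol_sq_le hK hn (h i).nonneg (h i).integrable
      (hsupp i) l).trans ?_
    gcongr
    exact Finset.single_le_sum (f := fun i => ∫ k, ρ i k * binomialSymbol (scaledBasis K) n k)
      (fun j _ => integral_mul_binomialSymbol_nonneg (h j).nonneg _ n) (Finset.mem_univ i)
  refine (eLpNorm_le_sum_coord hp (aestronglyMeasurable_fderiv_pointAverage h hf w _)).trans ?_
  have hbound : ∀ i ∈ Finset.univ, eLpNorm (fun ω => fderiv ℝ (pointAverage w (f ω)) 0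
      (EuclideanSpace.basisFun ι ℝ l) i) p μ ≤ ENNReal.ofReal √(filteredVariance ρ K n / n) *
        (ENNReal.ofReal (K * Real.pi) * eLpNorm id p (gaussianReal 0 1)) := fun i _ => by
    have hu : Integrable fun k => ρ i k * ⟪k, EuclideanSpace.basisFun ι ℝ l⟫ ^ 2 := by
      simpa only [hinner] using integrable_mul_coord_sq (h i).integrable (hsupp i) l
    simp only [fderiv_pointAverage_coord (hf _)]
    refine ((h i).eLpNorm_fderiv_pointAverage_le
      (fun ω => contDiff_euclidean.1 (hf ω) i) w hu p).trans ?_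
    rw [← mul_assoc, ← ENNReal.ofReal_mul (Real.sqrt_nonneg _), mul_comm √_,
      ← Real.sqrt_sq (mul_pos hK Real.pi_pos).le, ← Real.sqrt_mul (sq_nonneg _)]
    gcongr
    exact hcoord i
  refine (Finset.sum_le_card_nsmul _ _ _ hbound).trans_eq ?_
  rw [Finset.card_univ, nsmul_eq_mul]
  ring

lemma holderTriple_four_four_two : ENNReal.HolderTriple 4 4 2 where
  inv_add_inv_eq_inv := by
    rw [← two_mul, show (4 : ℝ≥0∞) = 2 * 2 by norm_num, ENNReal.mul_inv (by simp) (by simp),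
      ← mul_assoc, ENNReal.mul_inv_cancel two_ne_zero ENNReal.ofNat_ne_top, one_mul]

lemma exists_eLpNorm_materialDeriv_le [IsProbabilityMeasure μ] (hK : 0 < K)
    (hf : ∀ ω, ContDiff ℝ 1 (f ω)) (h : ∀ i, HasSpectralDensity μ (fun ω x => f ω x i) (ρ i))
    (hsupp : ∀ i k, K < ‖k‖ → ρ i k = 0) (v : EuclideanSpace ℝ ι) :
    ∃ A : ℝ≥0∞, A ≠ ∞ ∧ ∀ δ : ℝ, |δ| ≤ 1 → ∀ n : ℕ, 0 < n →
      eLpNorm (fun ω => materialDeriv (binomialKernel (scaledBasis K) n) v δ (f ω)) 2 μ ≤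
        A * ENNReal.ofReal √(filteredVariance ρ K n / n) := by
  set N := eLpNorm id 4 (gaussianReal 0 1)
  have hf0 : ∀ l, MemLp (fun ω => f ω 0 l) 4 μ := fun l => by
    simpa only [pointAverage_one] using (h l).memLp_pointAverage 1 ENNReal.ofNat_ne_top
  have hf0' : AEStronglyMeasurable (fun ω => f ω 0) μ := by
    simpa only [pointAverage_one] using (memLp_pointAverage h 1 (p := 4) ENNReal.ofNat_ne_top).1
  have hN : N ≠ ∞ := (memLp_id_gaussianReal' 4 ENNReal.ofNat_ne_top).2.ne
  refine ⟨∑ l, (‖v l‖ₑ + eLpNorm (fun ω => f ω 0 l) 4 μ) *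
    (Fintype.card ι * (ENNReal.ofReal (K * Real.pi) * N)), ?_, fun δ hδ n hn => ?_⟩
  · refine ENNReal.sum_ne_top.2 fun l _ => ENNReal.mul_ne_top ?_ ?_
    · exact ENNReal.add_ne_top.2 ⟨enorm_ne_top, (hf0 l).2.ne⟩
    · exact ENNReal.mul_ne_top (ENNReal.natCast_ne_top _)
        (ENNReal.mul_ne_top ENNReal.ofReal_ne_top hN)
  have := holderTriple_four_four_two
  refine (eLpNorm_clm_apply_le
    (fun u => aestronglyMeasurable_fderiv_pointAverage h hf _ u)
    (aestronglyMeasurable_const.add (hf0'.const_smul δ)) 4 4 one_le_two).trans ?_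
  rw [Finset.sum_mul]
  refine Finset.sum_le_sum fun l _ => ?_
  rw [mul_assoc, mul_comm (_ * _) (ENNReal.ofReal √_)]
  gcongr
  · exact eLpNorm_const_add_mul_le (hf0 l).1 (v l) hδ (by norm_num)
  · exact eLpNorm_fderiv_pointAverage_basisFun_le hK hf h hsupp hn (by norm_num) l

end MaterialDerivativeMoments

section DisplacementLowerBound

variable {ι Ω : Type*} [Fintype ι] [MeasurableSpace Ω] {P : Measure Ω} {K : ℝ}
  {ρ : ι → EuclideanSpace ℝ ι → ℝ}

lemma integral_inner_pointAverage_binomialKernel {f : Ω → EuclideanSpace ℝ ι → EuclideanSpace ℝ ι}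
    (h : ∀ i, HasSpectralDensity P (fun ω x => f ω x i) (ρ i)) (n : ℕ) :
    ∫ ω, ⟪f ω 0, pointAverage (binomialKernel (scaledBasis K) n) (f ω) 0⟫ ∂P =
      filteredVariance ρ K n := by
  have hcorr := integral_inner_pointAverage h 1 (binomialKernel (scaledBasis K) n)
  simp only [pointAverage_one, map_one, symbol_binomialKernel] at hcorr
  rw [hcorr, filteredVariance]
  simp

lemma integral_norm_sq_pointAverage_binomialKernel_le
    {f : Ω → EuclideanSpace ℝ ι → EuclideanSpace ℝ ι}
    (h : ∀ i, HasSpectralDensity P (fun ω x => f ω x i) (ρ i)) (n : ℕ) :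
    ∫ ω, ‖pointAverage (binomialKernel (scaledBasis K) n) (f ω) 0‖ ^ 2 ∂P ≤
      filteredVariance ρ K n := by
  simp only [← real_inner_self_eq_norm_sq]
  rw [integral_inner_pointAverage h, filteredVariance]
  refine Finset.sum_le_sum fun i _ => ?_
  simp only [real_inner_self_eq_norm_sq]
  refine integral_mono (integrable_mul_norm_symbol_sq (h i).integrable _)
    (integrable_mul_binomialSymbol (h i).integrable _ n) fun k => ?_
  have hm := binomialSymbol_nonneg (scaledBasis K) n k
  simp only [symbol_binomialKernel, Complex.norm_real, Real.norm_of_nonneg hm]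
  exact mul_le_mul_of_nonneg_left
    (pow_le_of_le_one hm (binomialSymbol_le_one _ n k) two_ne_zero) ((h i).nonneg k)

/-- Choose `θ = 2 (1 + C) / (δ T)`. -/
lemma le_div_of_forall_young {δ T σ Y C g D : ℝ} (hδ : 0 < δ) (hT : 0 < T) (hC : 0 ≤ C)
    (hg : g ≤ σ) (hD : T ^ 2 * D ≤ C * σ)
    (h : ∀ θ > 0, T ^ 2 / 2 * (δ * σ) ≤ θ * Y + T * ((g + T ^ 2 * D) / (2 * θ))) :
    (8 * (1 + C))⁻¹ * (δ ^ 2 * (T ^ 2 * σ)) ≤ Y / T := by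
  have hθ : 0 < 2 * (1 + C) / (δ * T) := by positivity
  have hyoung : T ^ 2 / 2 * (δ * σ) ≤ 2 * (1 + C) / (δ * T) * Y + T ^ 2 / 4 * (δ * σ) := by
    refine (h _ hθ).trans ?_
    have hsum : g + T ^ 2 * D ≤ (1 + C) * σ := by linarith
    calc 2 * (1 + C) / (δ * T) * Y + T * ((g + T ^ 2 * D) / (2 * (2 * (1 + C) / (δ * T))))
        ≤ 2 * (1 + C) / (δ * T) * Y + T * ((1 + C) * σ / (2 * (2 * (1 + C) / (δ * T)))) := by
          gcongr
      _ = 2 * (1 + C) / (δ * T) * Y + T ^ 2 / 4 * (δ * σ) := by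
          field_simp
          ring
  calc (8 * (1 + C))⁻¹ * (δ ^ 2 * (T ^ 2 * σ))
      = δ / (2 * (1 + C)) * (T ^ 2 / 4 * (δ * σ)) := by field_simp; ring
    _ ≤ δ / (2 * (1 + C)) * (2 * (1 + C) / (δ * T) * Y) :=
        mul_le_mul_of_nonneg_left (by linarith) (by positivity)
    _ = Y / T := by field_simp

variable [IsProbabilityMeasure P] {f : Ω → SolenoidalField (EuclideanSpace ℝ ι)}

lemma exists_integral_norm_sq_materialDeriv_le (hK : 0 < K) (hf : Measurable f)
    (h : ∀ i, HasSpectralDensity P (fun ω x => (f ω).1 x i) (ρ i))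
    (hsupp : ∀ i k, K < ‖k‖ → ρ i k = 0) (v : EuclideanSpace ℝ ι) :
    ∃ C : ℝ, 0 ≤ C ∧ ∀ δ : ℝ, |δ| ≤ 1 → ∀ n : ℕ, 0 < n →
      Integrable (fun ω =>
        ‖materialDeriv (binomialKernel (scaledBasis K) n) v δ (f ω).1‖ ^ 2) P ∧
      ∫ ω, ‖materialDeriv (binomialKernel (scaledBasis K) n) v δ (f ω).1‖ ^ 2 ∂P ≤
        C * (filteredVariance ρ K n / n) := by
  obtain ⟨A, hA, hbound⟩ :=
    exists_eLpNorm_materialDeriv_le hK (fun ω => (f ω).contDiff) h hsupp v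
  refine ⟨A.toReal ^ 2, sq_nonneg _, fun δ hδ n hn => ?_⟩
  have hσ : 0 ≤ filteredVariance ρ K n / n := div_nonneg
    (Finset.sum_nonneg fun i _ => integral_mul_binomialSymbol_nonneg (h i).nonneg _ n)
    n.cast_nonneg
  have hmeas := ((SolenoidalField.measurable_materialDeriv
    (binomialKernel (scaledBasis K) n) v δ).comp hf).aestronglyMeasurable (μ := P)
  have hle := hbound δ hδ n hn
  rw [← ENNReal.ofReal_toReal hA, ← ENNReal.ofReal_mul ENNReal.toReal_nonneg] at hle
  refine ⟨(memLp_two_iff_integrable_sq_norm hmeas).1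
    ⟨hmeas, hle.trans_lt ENNReal.ofReal_lt_top⟩, ?_⟩
  rw [← Real.sq_sqrt hσ, ← mul_pow]
  exact integral_norm_sq_le_of_eLpNorm_le (by positivity) hmeas hle

/-- The filter acts at the spatial scale `T`, over which the mean drift carries the particle in
time `T`. -/
theorem exists_mul_filteredVariance_le_integral_div (hK : 0 < K) (hf : Measurable f)
    (hstat : SolenoidalField.IsStationary (P.map f))
    (h : ∀ i, HasSpectralDensity P (fun ω x => (f ω).1 x i) (ρ i))
    (hsupp : ∀ i k, K < ‖k‖ → ρ i k = 0) (v : EuclideanSpace ℝ ι) :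
    ∃ c > 0, ∀ δ ∈ Ioc (0 : ℝ) 1, ∀ X,
      IsSquareIntegrableTrajectory P (fun ω => (f ω).1) v δ X → ∀ T > 0,
      c * (δ ^ 2 * (T ^ 2 * filteredVariance ρ K ⌈T ^ 2⌉₊)) ≤
        (∫ s in (0 : ℝ)..T, ∫ ω, ‖X ω s - s • v‖ ^ 2 ∂P) / T := by
  obtain ⟨C, hC, hD⟩ := exists_integral_norm_sq_materialDeriv_le hK hf h hsupp v
  refine ⟨(8 * (1 + C))⁻¹, by positivity, fun δ hδ X hX T hT => ?_⟩
  set n := ⌈T ^ 2⌉₊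
  have hn : 0 < n := Nat.ceil_pos.2 (by positivity)
  have : (0 : ℝ) < n := Nat.cast_pos.2 hn
  obtain ⟨hDint, hDle⟩ := hD δ (abs_le.2 ⟨by linarith [hδ.1], hδ.2⟩) n hn
  have hGmem := memLp_pointAverage h (binomialKernel (scaledBasis K) n) ENNReal.ofNat_ne_top
    (p := 2)
  have hf0 : MemLp (fun ω => (f ω).1 0) 2 P := by
    simpa only [pointAverage_one] using memLp_pointAverage h 1 ENNReal.ofNat_ne_top
  refine le_div_of_forall_young hδ.1 hT hC (integral_norm_sq_pointAverage_binomialKernel_le h n)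
    (D := ∫ ω, ‖materialDeriv (binomialKernel (scaledBasis K) n) v δ (f ω).1‖ ^ 2 ∂P) ?_
    fun θ hθ => ?_
  · calc _ ≤ n * (C * (filteredVariance ρ K n / n)) := by
          gcongr
          exact Nat.le_ceil _
      _ = C * filteredVariance ρ K n := by field_simp
  · rw [← integral_inner_pointAverage_binomialKernel h n]
    exact sq_div_two_mul_integral_inner_pointAverage_le hf hstat hδ.1.ne' hX _
      (integrable_inner_of_memLp_two hf0 hGmem)
      ((memLp_two_iff_integrable_sq_norm hGmem.1).1 hGmem) hDint hT.le hθ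

end DisplacementLowerBound

section RandomFields

lemma trace_eq_sum_single_coord {ι : Type*} [Fintype ι] [DecidableEq ι]
    (L : EuclideanSpace ℝ ι →ₗ[ℝ] EuclideanSpace ℝ ι) :
    LinearMap.trace ℝ _ L = ∑ i, L (EuclideanSpace.single i 1) i := by
  rw [LinearMap.trace_eq_sum_inner L (EuclideanSpace.basisFun ι ℝ)]
  exact Finset.sum_congr rfl fun i _ => by
    rw [EuclideanSpace.basisFun_inner, EuclideanSpace.basisFun_apply]

lemma isSolenoidal_iff_sum_single_coord {ι : Type*} [Fintype ι] [DecidableEq ι]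
    {f : EuclideanSpace ℝ ι → EuclideanSpace ℝ ι} :
    IsSolenoidal f ↔ ContDiff ℝ 1 f ∧
      ∀ x, ∑ i, fderiv ℝ f x (EuclideanSpace.single i 1) i = 0 := by
  simp only [IsSolenoidal, trace_eq_sum_single_coord, ContinuousLinearMap.coe_coe]

lemma exists_measurable_solenoidalField_ae_eq {Ω E : Type*} [MeasurableSpace Ω] {P : Measure Ω}
    [NormedAddCommGroup E] [NormedSpace ℝ E] [MeasurableSpace E] {F : Ω → E → E}
    (hF : Measurable F) (hreg : ∀ᵐ ω ∂P, IsSolenoidal (F ω)) :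
    ∃ f : Ω → SolenoidalField E, Measurable f ∧ F =ᵐ[P] fun ω => (f ω).1 := by
  have hzero : IsSolenoidal (0 : E → E) := ⟨contDiff_const, fun x => by
    rw [fderiv_zero, Pi.zero_apply, ContinuousLinearMap.toLinearMap_zero, map_zero]⟩
  obtain ⟨g, hg, hgsol, hFg⟩ := hF.aemeasurable.exists_ae_eq_range_subset
    (t := {f | IsSolenoidal f}) hreg ⟨0, hzero⟩
  exact ⟨fun ω => ⟨g ω, hgsol (mem_range_self ω)⟩, hg.subtype_mk, hFg⟩

open scoped AddMonoidAlgebra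

variable {Ω E ι : Type*} [MeasurableSpace Ω] [NormedAddCommGroup E] [Fintype ι] {P : Measure Ω}

/-- The random vector field `F` is centred and Gaussian, and the covariance matrix of `F x` and
`F y` is `R (x - y)`. -/
def IsHomogeneousGaussian (P : Measure Ω) (F : Ω → E → EuclideanSpace ℝ ι)
    (R : E → ι → ι → ℝ) : Prop :=
  ∀ (N : ℕ) (x : Fin N → E) (c : Fin N → EuclideanSpace ℝ ι),
    P.map (fun ω => ∑ j, ⟪c j, F ω (x j)⟫) = gaussianReal 0 (Real.toNNReal
      (∑ j, ∑ l, ∑ i, ∑ i', c j i * R (x j - x l) i i' * c l i'))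

namespace IsHomogeneousGaussian

variable {F G : Ω → E → EuclideanSpace ℝ ι} {R : E → ι → ι → ℝ}

lemma congr_ae (h : IsHomogeneousGaussian P F R) (hFG : F =ᵐ[P] G) :
    IsHomogeneousGaussian P G R := fun N x c => by
  rw [← h N x c]
  exact Measure.map_congr (hFG.mono fun ω hω => by simp only [hω])

lemma map_sum_inner (h : IsHomogeneousGaussian P F R) (s : Finset E)
    (c : E → EuclideanSpace ℝ ι) :
    P.map (fun ω => ∑ y ∈ s, ⟪c y, F ω y⟫) = gaussianReal 0 (Real.toNNReal
      (∑ y ∈ s, ∑ z ∈ s, ∑ i, ∑ i', c y i * R (y - z) i i' * c z i')) := by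
  have hsum : ∀ g : E → ℝ, ∑ j, g (s.equivFin.symm j) = ∑ y ∈ s, g y := fun g =>
    (s.equivFin.symm.sum_comp fun y : s => g y).trans (Finset.sum_coe_sort s g)
  have hlaw := h s.card (fun j => s.equivFin.symm j) fun j => c (s.equivFin.symm j)
  have hinner : (fun ω => ∑ j, ⟪c (s.equivFin.symm j), F ω (s.equivFin.symm j)⟫) =
      fun ω => ∑ y ∈ s, ⟪c y, F ω y⟫ := funext fun ω => hsum fun y => ⟪c y, F ω y⟫
  have hcov : ∀ y, ∑ l, ∑ i, ∑ i', c y i * R (y - s.equivFin.symm l) i i' *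
      c (s.equivFin.symm l) i' = ∑ z ∈ s, ∑ i, ∑ i', c y i * R (y - z) i i' * c z i' :=
    fun y => hsum fun z => ∑ i, ∑ i', c y i * R (y - z) i i' * c z i'
  rw [← hinner, hlaw, ← hsum]
  simp only [hcov]

lemma map_sum_mul_coord (h : IsHomogeneousGaussian P F R) (i : ι) (s : Finset E) (c : E → ℝ) :
    P.map (fun ω => ∑ y ∈ s, c y * F ω y i) = gaussianReal 0 (Real.toNNReal
      (∑ y ∈ s, ∑ z ∈ s, c y * c z * R (y - z) i i)) := by
  classical
  have hlaw := h.map_sum_inner s fun z => EuclideanSpace.single i (c z)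
  simp only [EuclideanSpace.inner_single_left, conj_trivial, PiLp.single_apply, ite_mul, zero_mul,
    mul_ite, mul_zero, Finset.sum_ite_eq', Finset.mem_univ, if_true] at hlaw
  simpa only [mul_right_comm] using hlaw

lemma hasSpectralDensity [InnerProductSpace ℝ E] [MeasureSpace E] [OpensMeasurableSpace E]
    (h : IsHomogeneousGaussian P F R) {i : ι} {ρ : E → ℝ} (hρ0 : ∀ k, 0 ≤ ρ k)
    (hρ : Integrable ρ) (hR : ∀ x, R x i i = ∫ k, Real.cos ⟪k, x⟫ * ρ k) :
    HasSpectralDensity P (fun ω x => F ω x i) ρ where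
  nonneg := hρ0
  integrable := hρ
  map_pointAverage w := by
    have hcos : ∀ x, Integrable fun k => Real.cos ⟪k, x⟫ * ρ k := fun x =>
      hρ.bdd_mul (c := 1) (by fun_prop) (ae_of_all _ fun k => Real.abs_cos_le_one _)
    have hterm : ∀ y z, Integrable fun k => w.coeff y * w.coeff z * (Real.cos ⟪k, y - z⟫ * ρ k) :=
      fun y z => (hcos _).const_mul _
    have hvar : ∫ k, ρ k * ‖symbol k w‖ ^ 2 = ∑ y ∈ w.coeff.support, ∑ z ∈ w.coeff.support,
        w.coeff y * w.coeff z * R (y - z) i i := by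
      simp only [hR, ← integral_const_mul]
      simp only [← integral_finsetSum _ fun z _ => hterm _ z]
      rw [← integral_finsetSum _ fun y _ => integrable_finsetSum _ fun z _ => hterm y z]
      refine integral_congr_ae (ae_of_all _ fun k => ?_)
      simp only [norm_symbol_sq, Finset.mul_sum]
      exact Finset.sum_congr rfl fun y _ => Finset.sum_congr rfl fun z _ => by ring
    simp only [pointAverage_eq_sum, zero_add, smul_eq_mul]
    rw [hvar, h.map_sum_mul_coord]

end IsHomogeneousGaussian

lemma IsHomogeneousGaussian.isStationary [IsProbabilityMeasure P]
    {f : Ω → SolenoidalField (EuclideanSpace ℝ ι)}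
    {R : EuclideanSpace ℝ ι → ι → ι → ℝ} (hf : Measurable f)
    (h : IsHomogeneousGaussian P (fun ω => (f ω).1) R) :
    SolenoidalField.IsStationary (P.map f) := by
  intro x
  have hx : Measurable (SolenoidalField.translate (E := EuclideanSpace ℝ ι) x) :=
    SolenoidalField.measurable_translate.comp measurable_prodMk_left
  have := Measure.isProbabilityMeasure_map (μ := P) hf.aemeasurable
  refine SolenoidalField.measure_ext_of_sum_inner fun N y c => ?_
  have hm : Measurable fun g : SolenoidalField (EuclideanSpace ℝ ι) =>
      ∑ j, ⟪c j, g.1 (y j)⟫ :=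
    Finset.measurable_fun_sum _ fun j _ => (SolenoidalField.measurable_apply (y j)).const_inner
  rw [Measure.map_map hm hx, Measure.map_map (hm.comp hx) hf, Measure.map_map hm hf]
  refine ((h N (fun j => x + y j) c).trans ?_).trans (h N y c).symm
  simp only [add_sub_add_left_eq_sub]

end RandomFields

section TransverseSpectrum

variable {ι : Type*} [Fintype ι] {g : ℝ → ℝ} {K : ℝ}

/-- The diagonal entries `g(|k|) (1 - kᵢ² / |k|²)` of the isotropic transverse spectral density with
radial profile `g`. At `k = 0` the quotient is zero. -/
noncomputable def transverseDensity (g : ℝ → ℝ) (i : ι) (k : EuclideanSpace ℝ ι) : ℝ :=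
  g ‖k‖ * (1 - k i * k i / ‖k‖ ^ 2)

lemma coord_mul_self_div_norm_sq_le_one (k : EuclideanSpace ℝ ι) (i : ι) :
    k i * k i / ‖k‖ ^ 2 ≤ 1 := by
  refine div_le_one_of_le₀ ?_ (sq_nonneg _)
  rw [← sq]
  exact sq_le_sq.2 ((PiLp.norm_apply_le k i).trans (le_abs_self _))

lemma transverseDensity_nonneg (hg0 : ∀ r, 0 ≤ r → 0 ≤ g r) (i : ι) (k : EuclideanSpace ℝ ι) :
    0 ≤ transverseDensity g i k :=
  mul_nonneg (hg0 _ (norm_nonneg k)) (sub_nonneg.2 (coord_mul_self_div_norm_sq_le_one k i))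

lemma integrable_transverseDensity (hg : Integrable fun k : EuclideanSpace ℝ ι => g ‖k‖) (i : ι) :
    Integrable (transverseDensity g i) := by
  refine hg.mul_bdd (c := 1) (Measurable.aestronglyMeasurable (by fun_prop))
    (ae_of_all _ fun k => ?_)
  have hle := coord_mul_self_div_norm_sq_le_one k i
  have hnonneg : 0 ≤ k i * k i / ‖k‖ ^ 2 := div_nonneg (mul_self_nonneg _) (sq_nonneg _)
  rw [Real.norm_of_nonneg (sub_nonneg.2 hle)]
  exact sub_le_self 1 hnonneg

lemma le_sum_transverseDensity (hι : 2 ≤ Fintype.card ι) {k : EuclideanSpace ℝ ι}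
    (hg0 : 0 ≤ g ‖k‖) : g ‖k‖ ≤ ∑ i, transverseDensity g i k := by
  have hcard : (2 : ℝ) ≤ Fintype.card ι := by exact_mod_cast hι
  have hnorm : ∑ i, k i * k i = ‖k‖ ^ 2 := by
    simp only [EuclideanSpace.real_norm_sq_eq, ← sq]
  simp only [transverseDensity]
  rw [← Finset.mul_sum, Finset.sum_sub_distrib, ← Finset.sum_div, hnorm, Finset.sum_const,
    Finset.card_univ, nsmul_one]
  exact le_mul_of_one_le_right hg0 (by linarith [div_self_le_one (‖k‖ ^ 2)])

lemma mul_pow_card_le_sum_transverseDensity_mul_binomialSymbol (hι : 2 ≤ Fintype.card ι)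
    (hK : 0 < K) {k : EuclideanSpace ℝ ι} (hg0 : 0 ≤ g ‖k‖) {n : ℕ} (hn : n * ‖k‖ ^ 2 ≤ K ^ 2) :
    g ‖k‖ * (3 / 4) ^ Fintype.card ι ≤
      ∑ i, transverseDensity g i k * binomialSymbol (scaledBasis K) n k := by
  have hlow : ∀ l, n * ⟪k, scaledBasis K l⟫ ^ 2 ≤ 1 := fun l => by
    have hkl : k l ^ 2 ≤ ‖k‖ ^ 2 := sq_le_sq.2 ((PiLp.norm_apply_le k l).trans (le_abs_self _))
    rw [inner_scaledBasis, mul_pow, mul_left_comm, inv_pow,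
      inv_mul_le_one₀ (by positivity : 0 < K ^ 2)]
    exact (mul_le_mul_of_nonneg_left hkl n.cast_nonneg).trans hn
  rw [← Finset.sum_mul]
  exact mul_le_mul (le_sum_transverseDensity hι hg0)
    (three_div_four_pow_card_le_binomialSymbol hlow) (by positivity)
    (hg0.trans (le_sum_transverseDensity hι hg0))

lemma mul_volume_closedBall_le_filteredVariance (hι : 2 ≤ Fintype.card ι) (hK : 0 < K)
    (hg0 : ∀ r, 0 ≤ r → 0 ≤ g r) (hg : Integrable fun k : EuclideanSpace ℝ ι => g ‖k‖)
    {b r : ℝ} (hb : ∀ s ∈ Ioc 0 r, b ≤ g s) {n : ℕ} (hn : n * r ^ 2 ≤ K ^ 2) :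
    b * (3 / 4) ^ Fintype.card ι * volume.real (Metric.closedBall (0 : EuclideanSpace ℝ ι) r) ≤
      filteredVariance (transverseDensity (ι := ι) g) K n := by
  have : Nonempty ι := Fintype.card_pos_iff.1 (by lia)
  have hint : ∀ i : ι, Integrable fun k : EuclideanSpace ℝ ι =>
      transverseDensity g i k * binomialSymbol (scaledBasis K) n k := fun i =>
    integrable_mul_binomialSymbol (integrable_transverseDensity hg i) _ n
  have hbound : ∀ᵐ k : EuclideanSpace ℝ ι, k ∈ Metric.closedBall (0 : EuclideanSpace ℝ ι) r →
      b * (3 / 4) ^ Fintype.card ι ≤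
        ∑ i, transverseDensity g i k * binomialSymbol (scaledBasis K) n k := by
    filter_upwards [Measure.ae_ne volume (0 : EuclideanSpace ℝ ι)] with k hk hkr
    rw [mem_closedBall_zero_iff] at hkr
    have hnk : n * ‖k‖ ^ 2 ≤ K ^ 2 := hn.trans' (by gcongr)
    refine (mul_le_mul_of_nonneg_right (hb _ ⟨norm_pos_iff.2 hk, hkr⟩) (by positivity)).trans ?_
    exact mul_pow_card_le_sum_transverseDensity_mul_binomialSymbol hι hK (hg0 _ (norm_nonneg k)) hnk
  rw [filteredVariance, ← integral_finsetSum _ fun i _ => hint i]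
  calc _ = ∫ _ in Metric.closedBall (0 : EuclideanSpace ℝ ι) r, b * (3 / 4) ^ Fintype.card ι := by
        rw [setIntegral_const, smul_eq_mul, mul_comm]
    _ ≤ ∫ k in Metric.closedBall (0 : EuclideanSpace ℝ ι) r,
        ∑ i, transverseDensity g i k * binomialSymbol (scaledBasis K) n k :=
      setIntegral_mono_ae_restrict (integrableOn_const measure_closedBall_lt_top.ne)
        (integrable_finsetSum _ fun i _ => hint i).integrableOn
        ((ae_restrict_iff' measurableSet_closedBall).2 hbound)
    _ ≤ _ := setIntegral_le_integral (integrable_finsetSum _ fun i _ => hint i) <|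
      ae_of_all _ fun k => Finset.sum_nonneg fun i _ =>
        mul_nonneg (transverseDensity_nonneg hg0 i k) (binomialSymbol_nonneg _ n k)

end TransverseSpectrum

section PowerSpectrum

/-- The radial profile `a(r) r^{-(2α+d-2)}` of the power spectrum in dimension `d`. -/
noncomputable def powerProfile (d : ℕ) (α : ℝ) (a : ℝ → ℝ) (r : ℝ) : ℝ :=
  a r * r ^ (-(2 * α + d - 2))

variable {d : ℕ} {α K : ℝ} {a : ℝ → ℝ}

lemma covEntry_self (x : EuclideanSpace ℝ (Fin d)) (i : Fin d) :
    covEntry d α a x i i =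
      ∫ k, Real.cos ⟪k, x⟫ * transverseDensity (powerProfile d α a) i k := by
  simp only [covEntry, if_true, transverseDensity, powerProfile]

lemma powerProfile_nonneg (ha0 : ∀ r, 0 ≤ r → 0 ≤ a r) (r : ℝ) (hr : 0 ≤ r) :
    0 ≤ powerProfile d α a r :=
  mul_nonneg (ha0 r hr) (Real.rpow_nonneg hr _)

lemma integrable_powerProfile_norm {E : Type*} [NormedAddCommGroup E] [NormedSpace ℝ E]
    [FiniteDimensional ℝ E] [MeasurableSpace E] [BorelSpace E] [Nontrivial E] (μ : Measure E)
    [μ.IsAddHaarMeasure] (hα : α < 1) (hK : 0 ≤ K) (ha0 : ∀ r, 0 ≤ r → 0 ≤ a r)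
    (ha_bdd : ∃ M, ∀ r, 0 ≤ r → a r ≤ M) (ha_meas : Measurable a) (ha_supp : ∀ r, K < r → a r = 0) :
    Integrable (fun k : E => powerProfile (Module.finrank ℝ E) α a ‖k‖) μ := by
  have hd : 0 < Module.finrank ℝ E := Module.finrank_pos
  set d := Module.finrank ℝ E
  obtain ⟨M, hM⟩ := ha_bdd
  rw [integrable_fun_norm_addHaar μ (f := powerProfile d α a), ← Ioc_union_Ioi_eq_Ioi hK]
  have hdom : IntegrableOn (fun r : ℝ => M * r ^ (1 - 2 * α)) (Ioc 0 K) :=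
    (intervalIntegrable_iff_integrableOn_Ioc_of_le hK).1 <|
      (intervalIntegral.intervalIntegrable_rpow' (by linarith)).const_mul M
  refine IntegrableOn.union (hdom.mono' ?_ ?_) ?_
  · unfold powerProfile
    exact Measurable.aestronglyMeasurable (by fun_prop)
  · refine (ae_restrict_iff' measurableSet_Ioc).2 (ae_of_all _ fun r hr => ?_)
    have hpow : r ^ (d - 1) * r ^ (-(2 * α + d - 2)) = r ^ (1 - 2 * α) := by
      rw [← Real.rpow_natCast, ← Real.rpow_add hr.1, Nat.cast_pred hd]
      ring_nf
    rw [smul_eq_mul, powerProfile, mul_left_comm, hpow,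
      Real.norm_of_nonneg (mul_nonneg (ha0 r hr.1.le) (Real.rpow_nonneg hr.1.le _))]
    exact mul_le_mul_of_nonneg_right (hM r hr.1.le) (Real.rpow_nonneg hr.1.le _)
  · refine integrableOn_zero.congr_fun (fun r hr => ?_) measurableSet_Ioi
    simp only [powerProfile, ha_supp r hr, zero_mul, smul_zero]

lemma exists_forall_rpow_div_two_le_powerProfile (hd : 0 ≤ 2 * α + d - 2)
    (ha_cont : ContinuousAt a 0) (ha_one : a 0 = 1) :
    ∃ r₀ > 0, ∀ r ≤ r₀, ∀ s ∈ Ioc 0 r, r ^ (-(2 * α + d - 2)) / 2 ≤ powerProfile d α a s := by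
  have hhalf : ∀ᶠ s in 𝓝[>] (0 : ℝ), 1 / 2 < a s :=
    (ha_cont.eventually_const_lt (by rw [ha_one]; norm_num)).filter_mono nhdsWithin_le_nhds
  obtain ⟨r₀, hr₀, hsub⟩ := mem_nhdsGT_iff_exists_Ioc_subset.1 hhalf
  refine ⟨r₀, hr₀, fun r hr s hs => ?_⟩
  rw [div_eq_inv_mul, ← one_div]
  exact mul_le_mul (hsub ⟨hs.1, hs.2.trans hr⟩ : 1 / 2 < a s).le
    (Real.rpow_le_rpow_of_nonpos hs.1 hs.2 (neg_nonpos.2 hd))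
    (Real.rpow_nonneg (hs.1.le.trans hs.2) _)
    (one_half_pos.trans (hsub ⟨hs.1, hs.2.trans hr⟩ : 1 / 2 < a s)).le

lemma exists_mul_rpow_le_sq_mul_filteredVariance (hd : 2 ≤ d) (hα : 0 ≤ α) (hK : 0 < K)
    (ha0 : ∀ r, 0 ≤ r → 0 ≤ a r) (ha_cont : ContinuousAt a 0) (ha_one : a 0 = 1)
    (hint : Integrable fun k : EuclideanSpace ℝ (Fin d) => powerProfile d α a ‖k‖) :
    ∃ c > 0, ∀ᶠ T : ℝ in atTop, c * T ^ (2 * α) ≤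
      T ^ 2 *
        filteredVariance (transverseDensity (ι := Fin d) (powerProfile d α a)) K ⌈T ^ 2⌉₊ := by
  have hd2 : (2 : ℝ) ≤ d := by exact_mod_cast hd
  obtain ⟨r₀, hr₀, hlow⟩ := exists_forall_rpow_div_two_le_powerProfile (d := d) (α := α)
    (by linarith) ha_cont ha_one
  set V := volume.real (Metric.ball (0 : EuclideanSpace ℝ (Fin d)) 1)
  have hV : 0 < V := ENNReal.toReal_pos
    (Metric.measure_ball_pos _ _ one_pos).ne' measure_ball_lt_top.ne
  refine ⟨2⁻¹ * (3 / 4) ^ d * V * (K / 2) ^ (2 - 2 * α), by positivity, ?_⟩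
  filter_upwards [eventually_ge_atTop 1, eventually_ge_atTop (K / 2 / r₀)] with T hT1 hT
  have hT0 : 0 < T := one_pos.trans_le hT1
  set r := K / 2 / T with hr
  have hr0 : 0 < r := by positivity
  have hceil : (⌈T ^ 2⌉₊ : ℝ) * r ^ 2 ≤ K ^ 2 := by
    have hlt := (Nat.ceil_lt_add_one (sq_nonneg T)).le
    calc (⌈T ^ 2⌉₊ : ℝ) * r ^ 2 ≤ 4 * T ^ 2 * r ^ 2 := by gcongr; nlinarith
      _ = K ^ 2 := by rw [hr]; field_simp; norm_num
  have hvar := mul_volume_closedBall_le_filteredVariance (ι := Fin d) (by simpa using hd) hK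
    (powerProfile_nonneg ha0) hint (hlow r ((div_le_comm₀ hT0 hr₀).2 hT)) hceil
  rw [Measure.addHaar_real_closedBall _ _ hr0.le, finrank_euclideanSpace, Fintype.card_fin] at hvar
  have hpow : r ^ (-(2 * α + d - 2)) * r ^ d * T ^ 2 = (K / 2) ^ (2 - 2 * α) * T ^ (2 * α) := by
    rw [← Real.rpow_natCast r, ← Real.rpow_add hr0, hr, ← Real.rpow_natCast T,
      Real.div_rpow (by positivity) hT0.le, div_eq_mul_inv, ← Real.rpow_neg hT0.le, mul_assoc,
      ← Real.rpow_add hT0]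
    push_cast
    ring_nf
  calc _ = T ^ 2 * (r ^ (-(2 * α + d - 2)) / 2 * (3 / 4) ^ d * (r ^ d * V)) := by
        linear_combination -(2⁻¹ * (3 / 4) ^ d * V) * hpow
    _ ≤ _ := by gcongr

end PowerSpectrum

section Superdiffusion

variable {d : ℕ} {α K : ℝ} {a : ℝ → ℝ}

lemma exists_mul_sq_mul_rpow_le_integral_div (hd : 2 ≤ d) (hα0 : 0 ≤ α) (hα1 : α < 1) (hK : 0 < K)
    (ha0 : ∀ r, 0 ≤ r → 0 ≤ a r) (ha_bdd : ∃ M, ∀ r, 0 ≤ r → a r ≤ M) (ha_meas : Measurable a)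
    (ha_supp : ∀ r, K < r → a r = 0) (ha_cont : ContinuousAt a 0) (ha_one : a 0 = 1)
    {Ω : Type*} [MeasurableSpace Ω] {P : Measure Ω} [IsProbabilityMeasure P]
    {F : Ω → EuclideanSpace ℝ (Fin d) → EuclideanSpace ℝ (Fin d)} (hF : Measurable F)
    (hF_sol : ∀ᵐ ω ∂P, IsSolenoidal (F ω)) (hF_gauss : IsHomogeneousGaussian P F (covEntry d α a))
    (v : EuclideanSpace ℝ (Fin d)) :
    ∃ c > 0, ∀ᶠ T in atTop, ∀ δ ∈ Ioc (0 : ℝ) 1, ∀ X, IsSquareIntegrableTrajectory P F v δ X →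
      c * (δ ^ 2 * T ^ (2 * α)) ≤ (∫ s in (0 : ℝ)..T, ∫ ω, ‖X ω s - s • v‖ ^ 2 ∂P) / T := by
  have : Nonempty (Fin d) := ⟨⟨0, by lia⟩⟩
  have hint : Integrable fun k : EuclideanSpace ℝ (Fin d) => powerProfile d α a ‖k‖ := by
    simpa only [finrank_euclideanSpace_fin] using integrable_powerProfile_norm
      (E := EuclideanSpace ℝ (Fin d)) volume hα1 hK.le ha0 ha_bdd ha_meas ha_supp
  obtain ⟨f, hf, hFf⟩ := exists_measurable_solenoidalField_ae_eq hF hF_sol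
  have hf_gauss := hF_gauss.congr_ae hFf
  have hspec : ∀ i, HasSpectralDensity P (fun ω x => (f ω).1 x i)
      (transverseDensity (powerProfile d α a) i) := fun i =>
    hf_gauss.hasSpectralDensity (transverseDensity_nonneg (powerProfile_nonneg ha0) i)
      (integrable_transverseDensity hint i) fun x => covEntry_self x i
  have hsupp : ∀ i k, K < ‖k‖ → transverseDensity (ι := Fin d) (powerProfile d α a) i k = 0 :=
    fun i k hk => by simp only [transverseDensity, powerProfile, ha_supp _ hk, zero_mul]
  obtain ⟨c₁, hc₁, hlow⟩ := exists_mul_filteredVariance_le_integral_div hK hf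
    (hf_gauss.isStationary hf) hspec hsupp v
  obtain ⟨c₂, hc₂, hvar⟩ := exists_mul_rpow_le_sq_mul_filteredVariance hd hα0 hK ha0 ha_cont
    ha_one hint
  refine ⟨c₁ * c₂, mul_pos hc₁ hc₂, ?_⟩
  filter_upwards [hvar, eventually_gt_atTop 0] with T hT hT0 δ hδ X hX
  calc c₁ * c₂ * (δ ^ 2 * T ^ (2 * α)) = c₁ * (δ ^ 2 * (c₂ * T ^ (2 * α))) := by ring
    _ ≤ _ := by gcongr
    _ ≤ _ := hlow δ hδ X (hX.congr_ae hFf) T hT0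

lemma sq_mul_const_mul_rpow_rpow {δ τ ρ : ℝ} (hδ : 0 < δ) (hτ : 0 ≤ τ) (hα : α ≠ 0) :
    δ ^ 2 * (τ * δ ^ (-2 * (1 / (2 * α)) * (1 + ρ))) ^ (2 * α) =
      τ ^ (2 * α) * δ ^ (-2 * ρ) := by
  rw [Real.mul_rpow hτ (by positivity), ← Real.rpow_mul hδ.le, ← Real.rpow_natCast δ 2,
    mul_left_comm, ← Real.rpow_add hδ]
  congr 2
  push_cast
  field_simp
  ring

theorem stmt0_general (d : ℕ) (hd : 2 ≤ d)
    (α : ℝ) (hα0 : 0 < α) (hα1 : α < 1)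
    (K : ℝ) (hK : 0 < K)
    (a : ℝ → ℝ)
    (ha_nonneg : ∀ r : ℝ, 0 ≤ r → 0 ≤ a r)
    (ha_bdd : ∃ M : ℝ, ∀ r : ℝ, 0 ≤ r → a r ≤ M)
    (ha_meas : Measurable a)
    (ha_supp : ∀ r : ℝ, K < r → a r = 0)
    (ha_cont : ContinuousAt a 0)
    (ha_one : a 0 = 1)
    (v : EuclideanSpace ℝ (Fin d))
    (Ω : Type*) [MeasurableSpace Ω] (P : Measure Ω) [IsProbabilityMeasure P]
    (F : Ω → EuclideanSpace ℝ (Fin d) → EuclideanSpace ℝ (Fin d))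
    (hF_meas : Measurable F)
    (hF_sol : ∀ᵐ ω ∂P, IsSolenoidal (F ω))
    (hF_gauss : IsHomogeneousGaussian P F (covEntry d α a))
    (X : ℝ → Ω → ℝ → EuclideanSpace ℝ (Fin d))
    (hX : ∀ δ ∈ Ioc (0 : ℝ) 1, IsSquareIntegrableTrajectory P F v δ (X δ))
    (t ρ : ℝ) (ht : 0 < t) (hρ : 0 < ρ) :
    Tendsto (fun δ : ℝ =>
        (∫ s in (0:ℝ)..(t ^ (1 + ρ) * δ ^ (-2 * (1 / (2 * α)) * (1 + ρ))),
            ∫ ω, ‖X δ ω s - s • v‖ ^ 2 ∂P) /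
          (t ^ (1 + ρ) * δ ^ (-2 * (1 / (2 * α)) * (1 + ρ))))
      (𝓝[>] 0) atTop := by
  have hτ : 0 < t ^ (1 + ρ) := Real.rpow_pos_of_pos ht _
  have hexp : -2 * (1 / (2 * α)) * (1 + ρ) < 0 := by
    have : 0 < 1 / (2 * α) * (1 + ρ) := by positivity
    linarith
  obtain ⟨c, hc, hlow⟩ := exists_mul_sq_mul_rpow_le_integral_div hd hα0.le hα1 hK ha_nonneg
    ha_bdd ha_meas ha_supp ha_cont ha_one hF_meas hF_sol hF_gauss v
  have hT : Tendsto (fun δ : ℝ => t ^ (1 + ρ) * δ ^ (-2 * (1 / (2 * α)) * (1 + ρ)))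
      (𝓝[>] 0) atTop := (tendsto_rpow_neg_nhdsGT_zero hexp).const_mul_atTop hτ
  have hlim : Tendsto (fun δ : ℝ => c * ((t ^ (1 + ρ)) ^ (2 * α) * δ ^ (-2 * ρ))) (𝓝[>] 0) atTop :=
    ((tendsto_rpow_neg_nhdsGT_zero (by linarith)).const_mul_atTop (by positivity)).const_mul_atTop
      hc
  refine tendsto_atTop_mono' _ ?_ hlim
  filter_upwards [hT.eventually hlow, Ioc_mem_nhdsGT one_pos] with δ hδlow hδ
  rw [← sq_mul_const_mul_rpow_rpow hδ.1 hτ.le hα0.ne']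
  exact hδlow δ hδ (X δ) (hX δ hδ)

end Superdiffusion

/-- In the setting of a particle in the flow `v + δF`, with the Gaussian,
centered, homogeneous, divergence-free field `F` whose covariance has the power spectrum
determined by `a` and `α`, assume `1/2 < α < 1` and set `H = 1/(2α)`. For every `t > 0`
and `ρ > 0`, with `T_δ⁺ = t^{1+ρ} δ^{-2H(1+ρ)}`, the Cesàro limit
`lim_{δ→0+} Y_δ(T_δ⁺)/T_δ⁺ = +∞`, where `Y_δ(T) = ∫₀^T E|y_δ(s)|² ds` and
`y_δ(s) = X_δ(s) - vs`. -/
theorem stmt0 (d : ℕ) (hd : 2 ≤ d)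
    (α : ℝ) (hα1 : 1 / 2 < α) (hα2 : α < 1)
    (K : ℝ) (hK : 0 < K)
    (a : ℝ → ℝ)
    (ha_nonneg : ∀ r : ℝ, 0 ≤ r → 0 ≤ a r)
    (ha_bdd : ∃ M : ℝ, ∀ r : ℝ, 0 ≤ r → a r ≤ M)
    (ha_meas : Measurable a)
    (ha_supp : ∀ r : ℝ, K < r → a r = 0)
    (ha_cont : ContinuousAt a 0)
    (ha_one : a 0 = 1)
    (v : EuclideanSpace ℝ (Fin d)) (hv : ‖v‖ = 1)
    (Ω : Type*) [MeasurableSpace Ω] (P : Measure Ω) [IsProbabilityMeasure P]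
    (F : Ω → EuclideanSpace ℝ (Fin d) → EuclideanSpace ℝ (Fin d))
    (hF_meas : Measurable (Function.uncurry F))
    (hF_reg : ∀ᵐ ω ∂P, ContDiff ℝ 1 (F ω) ∧
      ∀ x : EuclideanSpace ℝ (Fin d),
        ∑ i : Fin d, fderiv ℝ (F ω) x (EuclideanSpace.single i 1) i = 0)
    (hF_gauss : ∀ (N : ℕ) (x c : Fin N → EuclideanSpace ℝ (Fin d)),
      Measure.map (fun ω => ∑ j : Fin N, ⟪c j, F ω (x j)⟫) P =
        gaussianReal 0 (Real.toNNReal (∑ j : Fin N, ∑ l : Fin N,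
          ∑ i : Fin d, ∑ i' : Fin d,
            c j i * covEntry d α a (x j - x l) i i' * c l i')))
    (X : ℝ → Ω → ℝ → EuclideanSpace ℝ (Fin d))
    (hX_meas : ∀ δ ∈ Ioc (0:ℝ) 1, Measurable (Function.uncurry (X δ)))
    (hX_sol : ∀ δ ∈ Ioc (0:ℝ) 1, ∀ᵐ ω ∂P, X δ ω 0 = 0 ∧
      ∀ s : ℝ, 0 ≤ s → HasDerivAt (X δ ω) (v + δ • F ω (X δ ω s)) s)
    (hy_int : ∀ δ ∈ Ioc (0:ℝ) 1, ∀ s : ℝ,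
      Integrable (fun ω => ‖X δ ω s - s • v‖ ^ 2) P)
    (hy_loc : ∀ δ ∈ Ioc (0:ℝ) 1, ∀ T : ℝ,
      IntegrableOn (fun s => ∫ ω, ‖X δ ω s - s • v‖ ^ 2 ∂P) (Icc 0 T) volume)
    (t ρ : ℝ) (ht : 0 < t) (hρ : 0 < ρ) :
    Tendsto (fun δ : ℝ =>
        (∫ s in (0:ℝ)..(t ^ (1 + ρ) * δ ^ (-2 * (1 / (2 * α)) * (1 + ρ))),
            ∫ ω, ‖X δ ω s - s • v‖ ^ 2 ∂P) /
          (t ^ (1 + ρ) * δ ^ (-2 * (1 / (2 * α)) * (1 + ρ))))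
      (nhdsWithin 0 (Ioi 0)) atTop := by
  exact stmt0_general d hd α (by linarith) hα2 K hK a ha_nonneg ha_bdd ha_meas ha_supp ha_cont
    ha_one v Ω P F (measurable_pi_iff.2 fun x => hF_meas.comp measurable_prodMk_right)
    (hF_reg.mono fun ω => isSolenoidal_iff_sum_single_coord.2) hF_gauss X
    (fun δ hδ => ⟨hX_meas δ hδ, hX_sol δ hδ, hy_int δ hδ, hy_loc δ hδ⟩) t ρ ht hρ
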